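/- arXiv:1407.4680 — 2 statements merged into one kernel-verified Lean document; each statement's English description precedes it below -/
import Mathlib

section
/- For every g ≥ 5, the abelianisation of the group O_{g,g}(ℤ) is isomorphic to (ℤ/2ℤ) × (ℤ/2ℤ). -/
/-!
Let `σ` exchange the two basis vectors of each hyperbolic plane. The elementary isometries
`v ↦ v + c v_u e_w - c v_{σ w} e_{σ u}` are commutators of one another once there are three planes,
and with them the Euclidean algorithm carries any isotropic vector into a coordinate line. Hence
every isometry is, modulo commutators, an isometry of a single hyperbolic plane over `ℤ`, and these
form a Klein four-group generated by `-1` on the plane and by the exchange of its two basis vectors.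
Two characters with values `±1` separate its elements: the determinant, and the action on the
orientations of maximal positive definite real subspaces. In coordinates that diagonalize the form,
the latter is the sign of the determinant of the positive block.
-/

open Matrix

/-- Index type for `2g × 2g` matrices: the first `g` indices correspond to the
basis vectors `e₁, …, e_g` and the last `g` to `f₁, …, f_g`. -/
abbrev HypIdx (g : ℕ) := Fin g ⊕ Fin g

/-- Gram matrix of the orthogonal sum of `g` hyperbolic planes. -/
def Qmat (g : ℕ) : Matrix (HypIdx g) (HypIdx g) ℤ := Matrix.fromBlocks 0 1 1 0

/-- The standard symplectic form matrix. -/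
def Jmat (g : ℕ) : Matrix (HypIdx g) (HypIdx g) ℤ := Matrix.fromBlocks 0 1 (-1) 0

/-- The subgroup of `GL_{2g}(ℤ)` of matrices `A` with `Aᵀ * Q * A = Q`. -/
def formGroup (g : ℕ) (Q : Matrix (HypIdx g) (HypIdx g) ℤ) :
    Subgroup (GL (HypIdx g) ℤ) where
  carrier := {A | A.valᵀ * Q * A.val = Q}
  one_mem' := by simp
  mul_mem' := by
    intro A B hA hB
    have hA' : A.valᵀ * Q * A.val = Q := hA
    have hB' : B.valᵀ * Q * B.val = Q := hB
    show (A * B).valᵀ * Q * (A * B).val = Q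
    rw [Units.val_mul, transpose_mul]
    calc B.valᵀ * A.valᵀ * Q * (A.val * B.val)
        = B.valᵀ * (A.valᵀ * Q * A.val) * B.val := by noncomm_ring
      _ = B.valᵀ * Q * B.val := by rw [hA']
      _ = Q := hB'
  inv_mem' := by
    intro A hA
    have hA' : A.valᵀ * Q * A.val = Q := hA
    show (A⁻¹).valᵀ * Q * (A⁻¹).val = Q
    have h1 : A.val * (A⁻¹).val = 1 := by
      rw [← Units.val_mul, mul_inv_cancel, Units.val_one]
    calc (A⁻¹).valᵀ * Q * (A⁻¹).val
        = (A⁻¹).valᵀ * (A.valᵀ * Q * A.val) * (A⁻¹).val := by rw [hA']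
      _ = (A.val * (A⁻¹).val)ᵀ * Q * (A.val * (A⁻¹).val) := by
          rw [transpose_mul]; noncomm_ring
      _ = Q := by rw [h1]; simp

/-- `O_{g,g}(ℤ)`. -/
def Ogg (g : ℕ) : Subgroup (GL (HypIdx g) ℤ) := formGroup g (Qmat g)

/-- `Sp_{2g}(ℤ)`. -/
def Sp (g : ℕ) : Subgroup (GL (HypIdx g) ℤ) := formGroup g (Jmat g)

/-- The standard quadratic refinement `q(x, y) = Σᵢ xᵢ yᵢ mod 2`. -/
def qform (g : ℕ) (v : HypIdx g → ℤ) : ZMod 2 :=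
  ∑ i : Fin g, ((v (Sum.inl i) * v (Sum.inr i) : ℤ) : ZMod 2)

/-- The subgroup of `GL_{2g}(ℤ)` preserving the quadratic refinement `q`. -/
def qPreserving (g : ℕ) : Subgroup (GL (HypIdx g) ℤ) where
  carrier := {A | ∀ v : HypIdx g → ℤ, qform g (A.val.mulVec v) = qform g v}
  one_mem' := by intro v; simp
  mul_mem' := by
    intro A B hA hB v
    show qform g ((A * B).val.mulVec v) = qform g v
    rw [Units.val_mul, ← Matrix.mulVec_mulVec, hA, hB]
  inv_mem' := by
    intro A hA v
    have h1 : A.val.mulVec ((A⁻¹).val.mulVec v) = v := by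
      rw [Matrix.mulVec_mulVec, ← Units.val_mul, mul_inv_cancel, Units.val_one,
        Matrix.one_mulVec]
    calc qform g ((A⁻¹).val.mulVec v)
        = qform g (A.val.mulVec ((A⁻¹).val.mulVec v)) := (hA _).symm
      _ = qform g v := by rw [h1]

/-- `Sp^q_{2g}(ℤ)`: symplectic matrices preserving the quadratic refinement. -/
def Spq (g : ℕ) : Subgroup (GL (HypIdx g) ℤ) := Sp g ⊓ qPreserving g

section IsometryGroup

open scoped Matrix.Module

variable {n R : Type*} [Fintype n] [CommRing R] {B : Matrix n n R}

theorem transpose_mul_mul_eq_iff {M : Matrix n n R} :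
    Mᵀ * B * M = B ↔ ∀ v w, (M *ᵥ v) ⬝ᵥ (B *ᵥ (M *ᵥ w)) = v ⬝ᵥ (B *ᵥ w) := by
  have form_mulVec v w : (M *ᵥ v) ⬝ᵥ (B *ᵥ (M *ᵥ w)) = v ⬝ᵥ ((Mᵀ * B * M) *ᵥ w) := by
    simp only [← mulVec_mulVec, dotProduct_mulVec v, vecMul_transpose]
  classical
  simp only [form_mulVec]
  refine ⟨fun h v w => by rw [h], fun h => ext_of_mulVec_single fun j => ?_⟩
  refine dotProduct_eq _ _ fun v => ?_
  rw [dotProduct_comm, h, dotProduct_comm]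

variable [DecidableEq n]

/-- The isometry group of the bilinear form with Gram matrix `B`, as matrices. It acts on `n → R`
by matrix-vector multiplication through the scoped instance of `Matrix.Module`. -/
def isometryGroup (B : Matrix n n R) : Subgroup (GL n R) where
  carrier := {A | A.valᵀ * B * A.val = B}
  one_mem' := by simp
  mul_mem' {A A'} hA hA' := by
    rw [Set.mem_ofPred_eq] at hA hA' ⊢
    calc (A * A').valᵀ * B * (A * A').val
        = A'.valᵀ * (A.valᵀ * B * A.val) * A'.val := by
          simp only [Units.val_mul, transpose_mul, Matrix.mul_assoc]
      _ = B := by rw [hA, hA']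
  inv_mem' {A} hA := by
    rw [Set.mem_ofPred_eq] at hA ⊢
    calc A⁻¹.valᵀ * B * A⁻¹.val
        = A⁻¹.valᵀ * (A.valᵀ * B * A.val) * A⁻¹.val := by rw [hA]
      _ = (A.val * A⁻¹.val)ᵀ * B * (A.val * A⁻¹.val) := by
          simp only [transpose_mul, Matrix.mul_assoc]
      _ = B := by simp

theorem mem_isometryGroup {A : GL n R} : A ∈ isometryGroup B ↔ A.valᵀ * B * A.val = B := Iff.rfl

section ChangeOfForm

variable {A : GL n R}

theorem map_mem_isometryGroup {R' : Type*} [CommRing R'] (f : R →+* R') (hA : A ∈ isometryGroup B) :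
    GeneralLinearGroup.map f A ∈ isometryGroup (B.map f) := by
  rw [mem_isometryGroup] at hA ⊢
  change (A.val.map f)ᵀ * B.map f * A.val.map f = B.map f
  rw [← transpose_map, ← Matrix.map_mul, ← Matrix.map_mul, hA]

theorem inv_mul_mul_mem_isometryGroup (P : GL n R) (hA : A ∈ isometryGroup B) :
    P⁻¹ * A * P ∈ isometryGroup (P.valᵀ * B * P.val) := by
  have hP : P.val * (P⁻¹ * A * P).val = A.val * P.val := by
    rw [← Units.val_mul, mul_assoc, mul_inv_cancel_left, Units.val_mul]
  calc (P⁻¹ * A * P).valᵀ * (P.valᵀ * B * P.val) * (P⁻¹ * A * P).val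
      = (P.val * (P⁻¹ * A * P).val)ᵀ * B * (P.val * (P⁻¹ * A * P).val) := by
        simp only [transpose_mul, Matrix.mul_assoc]
    _ = P.valᵀ * (A.valᵀ * B * A.val) * P.val := by
        rw [hP]
        simp only [transpose_mul, Matrix.mul_assoc]
    _ = P.valᵀ * B * P.val := by rw [mem_isometryGroup.mp hA]

theorem isometryGroup_smul {c : R} (hc : IsUnit c) :
    isometryGroup (c • B) = isometryGroup B := by
  ext A
  rw [mem_isometryGroup, mem_isometryGroup, Matrix.mul_smul, Matrix.smul_mul, hc.smul_left_cancel]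

end ChangeOfForm

namespace isometryGroup

theorem smul_eq_mulVec (A : isometryGroup B) (v : n → R) : A • v = A.1.val *ᵥ v := rfl

theorem ext_smul_single {A A' : isometryGroup B}
    (h : ∀ j, A • (Pi.single j 1 : n → R) = A' • (Pi.single j 1 : n → R)) : A = A' :=
  Subtype.ext (Units.ext (ext_of_mulVec_single h))

theorem smul_dotProduct_mulVec_smul (A : isometryGroup B) (v w : n → R) :
    (A • v) ⬝ᵥ (B *ᵥ (A • w)) = v ⬝ᵥ (B *ᵥ w) :=
  transpose_mul_mul_eq_iff.mp A.2 v w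

theorem isUnit_det_of_transpose_mul_mul (hB : IsUnit B.det) {M : Matrix n n R}
    (hM : Mᵀ * B * M = B) : IsUnit M.det := by
  have h : M.det * B.det * M.det = B.det := by
    simpa only [det_mul, det_transpose] using congrArg det hM
  rw [← h] at hB
  exact isUnit_of_mul_isUnit_right hB

/-- A matrix preserving a nondegenerate form, as an element of its isometry group. -/
noncomputable def ofMatrix (hB : IsUnit B.det) (M : Matrix n n R) (hM : Mᵀ * B * M = B) :
    isometryGroup B :=
  ⟨M.nonsingInvUnit (isUnit_det_of_transpose_mul_mul hB hM), hM⟩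

end isometryGroup

end IsometryGroup

section IndefiniteOrthogonal

open LieAlgebra.Orthogonal (indefiniteDiagonal)
open scoped Matrix.Module

variable {p q : Type*} [Fintype p] [Fintype q] [DecidableEq p] [DecidableEq q]

theorem dotProduct_indefiniteDiagonal_mulVec {R : Type*} [CommRing R] (x : p ⊕ q → R) :
    x ⬝ᵥ (indefiniteDiagonal p q R *ᵥ x) =
      (x ∘ Sum.inl) ⬝ᵥ (x ∘ Sum.inl) - (x ∘ Sum.inr) ⬝ᵥ (x ∘ Sum.inr) := by
  simp [indefiniteDiagonal, mulVec_diagonal, dotProduct, Fintype.sum_sum_type, sub_eq_add_neg]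

namespace isometryGroup

variable (A A' : isometryGroup (indefiniteDiagonal p q ℝ))

theorem smul_comp_inl_ne_zero {x : p ⊕ q → ℝ} (hx : 0 < x ⬝ᵥ (indefiniteDiagonal p q ℝ *ᵥ x)) :
    (A • x) ∘ Sum.inl ≠ 0 := by
  intro h
  rw [← smul_dotProduct_mulVec_smul A x x, dotProduct_indefiniteDiagonal_mulVec, h,
    zero_dotProduct, zero_sub, neg_pos] at hx
  exact hx.not_ge (dotProduct_star_self_nonneg ((A • x) ∘ Sum.inr))

theorem smul_eq_sumElim (x : p ⊕ q → ℝ) :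
    A • x = Sum.elim
      (A.1.val.toBlocks₁₁ *ᵥ x ∘ Sum.inl + A.1.val.toBlocks₁₂ *ᵥ x ∘ Sum.inr)
      (A.1.val.toBlocks₂₁ *ᵥ x ∘ Sum.inl + A.1.val.toBlocks₂₂ *ᵥ x ∘ Sum.inr) := by
  rw [smul_eq_mulVec, ← fromBlocks_mulVec, fromBlocks_toBlocks]

theorem det_toBlocks₁₁_mul_add_smul_ne_zero {t : ℝ} (ht : t ^ 2 ≤ 1) :
    (A.1.val.toBlocks₁₁ * A'.1.val.toBlocks₁₁ +
      t • (A.1.val.toBlocks₁₂ * A'.1.val.toBlocks₂₁)).det ≠ 0 := by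
  intro hdet
  obtain ⟨v, hv, hker⟩ := exists_mulVec_eq_zero_iff.mpr hdet
  set x := A'.1.val.toBlocks₁₁ *ᵥ v with hx
  set y := A'.1.val.toBlocks₂₁ *ᵥ v with hy
  have hpos : 0 < x ⬝ᵥ x - y ⬝ᵥ y := by
    have h := smul_dotProduct_mulVec_smul A' (Sum.elim v 0) (Sum.elim v 0)
    simp only [dotProduct_indefiniteDiagonal_mulVec, smul_eq_sumElim, Sum.elim_comp_inl,
      Sum.elim_comp_inr, mulVec_zero, add_zero, dotProduct_zero, sub_zero, ← hx, ← hy] at h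
    rw [h]
    exact dotProduct_star_self_pos_iff.mpr hv
  -- Scaling the negative part of a positive vector by `|t| ≤ 1` keeps it positive.
  have hpos' : 0 < Sum.elim x (t • y) ⬝ᵥ (indefiniteDiagonal p q ℝ *ᵥ Sum.elim x (t • y)) := by
    simp only [dotProduct_indefiniteDiagonal_mulVec, Sum.elim_comp_inl, Sum.elim_comp_inr,
      smul_dotProduct, dotProduct_smul, smul_eq_mul]
    have hy_nonneg : 0 ≤ y ⬝ᵥ y := dotProduct_star_self_nonneg y
    nlinarith
  refine smul_comp_inl_ne_zero A hpos' ?_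
  simpa only [smul_eq_sumElim, Sum.elim_comp_inl, Sum.elim_comp_inr, add_mulVec, smul_mulVec,
    mulVec_smul, ← mulVec_mulVec] using hker

theorem sign_det_toBlocks₁₁_mul :
    SignType.sign (A * A').1.val.toBlocks₁₁.det =
      SignType.sign A.1.val.toBlocks₁₁.det * SignType.sign A'.1.val.toBlocks₁₁.det := by
  -- Scale the second term of `(A * A')₁₁ = A₁₁ * A'₁₁ + A₁₂ * A'₂₁` to `0`, staying invertible.
  let path : ℝ → ℝ := fun t =>
    (A.1.val.toBlocks₁₁ * A'.1.val.toBlocks₁₁ +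
      t • (A.1.val.toBlocks₁₂ * A'.1.val.toBlocks₂₁)).det
  have path_zero : path 0 = A.1.val.toBlocks₁₁.det * A'.1.val.toBlocks₁₁.det := by simp [path]
  have path_one : path 1 = (A * A').1.val.toBlocks₁₁.det := by
    simp only [path, one_smul, Subgroup.coe_mul, Units.val_mul]
    conv_rhs => rw [← fromBlocks_toBlocks A.1.val, ← fromBlocks_toBlocks A'.1.val,
      fromBlocks_multiply, toBlocks_fromBlocks₁₁]
  have path_ne_zero : ∀ t ∈ Set.Icc (0 : ℝ) 1, path t ≠ 0 := fun t ht =>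
    det_toBlocks₁₁_mul_add_smul_ne_zero A A' (pow_le_one₀ ht.1 ht.2)
  have path_continuous : Continuous path := by fun_prop
  rw [← sign_mul, ← path_zero, ← path_one]
  exact isPreconnected_Icc.constant (f := SignType.sign ∘ path)
    (fun t ht => ((continuousAt_sign_of_ne_zero (path_ne_zero t ht)).comp
      path_continuous.continuousAt).continuousWithinAt)
    (Set.right_mem_Icc.mpr zero_le_one) (Set.left_mem_Icc.mpr zero_le_one)

/-- The character of `O(p, q)` recording whether an isometry preserves or reverses the orientation
of maximal positive definite subspaces; up to convention this is the real spinor norm. -/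
noncomputable def positiveOrientation :
    isometryGroup (indefiniteDiagonal p q ℝ) →* SignType where
  toFun A := SignType.sign A.1.val.toBlocks₁₁.det
  map_one' := by
    rw [Subgroup.coe_one, Units.val_one, ← fromBlocks_one, toBlocks_fromBlocks₁₁, det_one, sign_one]
  map_mul' := sign_det_toBlocks₁₁_mul

end isometryGroup

end IndefiniteOrthogonal

section SplitOrthogonal

open LieAlgebra.Orthogonal (JD)
open scoped Matrix.Module commutatorElement

section Plane

variable {ι R : Type*}

/-- The index of the hyperbolic plane spanned by the basis vectors indexed by `u` and `u.swap`. -/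
def plane : ι ⊕ ι → ι := Sum.elim id id

theorem plane_swap (u : ι ⊕ ι) : plane u.swap = plane u := by cases u <;> rfl

theorem plane_eq_plane_iff {u w : ι ⊕ ι} : plane u = plane w ↔ u = w ∨ u = w.swap := by
  cases u <;> cases w <;> simp [plane]

theorem sum_swap_ne_self (u : ι ⊕ ι) : u.swap ≠ u := by cases u <;> simp

theorem sum_swap_inj {u w : ι ⊕ ι} : u.swap = w.swap ↔ u = w :=
  Sum.swap_leftInverse.injective.eq_iff

theorem sum_swap_eq_iff {u w : ι ⊕ ι} : u.swap = w ↔ u = w.swap := by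
  rw [← sum_swap_inj, Sum.swap_swap]

variable [DecidableEq ι]

theorem single_comp_swap [Zero R] (u : ι ⊕ ι) (c : R) :
    (Pi.single u c : ι ⊕ ι → R) ∘ Sum.swap = Pi.single u.swap c := by
  ext w
  rcases u with u | u <;> rcases w with w | w <;> simp [Pi.single_apply]

end Plane

variable {ι R : Type*} [Fintype ι] [DecidableEq ι] [CommRing R]

theorem JD_mulVec (v : ι ⊕ ι → R) : JD ι R *ᵥ v = v ∘ Sum.swap := by
  ext (i | i) <;> simp [JD, fromBlocks_mulVec]

theorem isUnit_det_JD : IsUnit (JD ι R).det :=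
  isUnit_det_of_left_inverse (B := JD ι R) (by simp [JD, fromBlocks_multiply])

variable (ι R) in
/-- The isometry group `O_{ι,ι}(R)` of a sum of hyperbolic planes indexed by `ι`. -/
abbrev splitOrthogonalGroup : Subgroup (GL (ι ⊕ ι) R) := isometryGroup (JD ι R)

namespace splitOrthogonalGroup

theorem smul_dotProduct_smul_comp_swap (A : splitOrthogonalGroup ι R) (v w : ι ⊕ ι → R) :
    (A • v) ⬝ᵥ ((A • w) ∘ Sum.swap) = v ⬝ᵥ (w ∘ Sum.swap) := by
  simpa only [JD_mulVec] using isometryGroup.smul_dotProduct_mulVec_smul A v w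

theorem one_add_single_sub_single_mulVec (u w : ι ⊕ ι) (c : R) (v : ι ⊕ ι → R) :
    (1 + single w u c - single u.swap w.swap c) *ᵥ v =
      v + Pi.single w (c * v u) - Pi.single u.swap (c * v w.swap) := by
  rw [sub_mulVec, add_mulVec, one_mulVec, single_mulVec, single_mulVec]
  rfl

/-- The Eichler transformation of two orthogonal isotropic basis vectors. These play the role of
the elementary matrices of the general linear group. -/
noncomputable def elementary {u w : ι ⊕ ι} (h : plane u ≠ plane w) (c : R) :
    splitOrthogonalGroup ι R :=
  isometryGroup.ofMatrix isUnit_det_JD (1 + single w u c - single u.swap w.swap c) <| by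
    have huw : u ≠ w := fun e => h (congrArg plane e)
    refine transpose_mul_mul_eq_iff.mpr fun v z => ?_
    simp only [one_add_single_sub_single_mulVec, JD_mulVec, Pi.sub_comp, Pi.add_comp,
      single_comp_swap, Sum.swap_swap, dotProduct_sub, dotProduct_add, sub_dotProduct,
      add_dotProduct, single_dotProduct, Function.comp_apply, dotProduct_single, Pi.sub_apply,
      Pi.add_apply, ne_eq, sum_swap_ne_self, not_false_eq_true, Pi.single_eq_of_ne, add_zero,
      sum_swap_inj, Ne.symm huw, sub_zero, Pi.single_eq_of_ne']
    ring

theorem elementary_smul {u w : ι ⊕ ι} (h : plane u ≠ plane w) (c : R) (v : ι ⊕ ι → R) :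
    elementary h c • v = v + Pi.single w (c * v u) - Pi.single u.swap (c * v w.swap) :=
  one_add_single_sub_single_mulVec u w c v

theorem elementary_smul_single_swap {u w : ι ⊕ ι} (h : plane u ≠ plane w) (c a : R) :
    elementary h c • (Pi.single u.swap a : ι ⊕ ι → R) = Pi.single u.swap a := by
  have huw : u ≠ w := fun e => h (congrArg plane e)
  simp [elementary_smul, (sum_swap_ne_self _).symm, sum_swap_inj, huw.symm]

theorem commutatorElement_elementary {u w z : ι ⊕ ι} (huw : plane u ≠ plane w)
    (hwz : plane w ≠ plane z) (huz : plane u ≠ plane z) (c : R) :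
    ⁅elementary hwz (1 : R), elementary huw c⁆ = elementary huz c := by
  rw [commutatorElement_def, mul_inv_eq_iff_eq_mul, mul_inv_eq_iff_eq_mul]
  refine isometryGroup.ext_smul_single fun j => ?_
  generalize (Pi.single j 1 : ι ⊕ ι → R) = v
  have huw' := not_or.mp (plane_eq_plane_iff.not.mp huw)
  have huz' := not_or.mp (plane_eq_plane_iff.not.mp huz)
  have hwz' := not_or.mp (plane_eq_plane_iff.not.mp hwz)
  simp only [mul_smul, elementary_smul, Pi.sub_apply, Pi.add_apply, Pi.single_eq_same, ne_eq,
    sum_swap_eq_iff, huw', not_false_eq_true, Pi.single_eq_of_ne', sub_zero, mul_add, one_mul,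
    Pi.single_add, hwz', add_zero, Sum.swap_swap, Ne.symm huz'.1, Pi.single_eq_of_ne, huz', mul_sub,
    Pi.single_sub, (sum_swap_ne_self _).symm, sub_self]
  abel

theorem elementary_mem_commutator (hι : 3 ≤ Fintype.card ι) {u z : ι ⊕ ι}
    (huz : plane u ≠ plane z) (c : R) :
    elementary huz c ∈ commutator (splitOrthogonalGroup ι R) := by
  obtain ⟨i, hiu, hiz⟩ : ∃ i, i ≠ plane u ∧ i ≠ plane z :=
    Cardinal.exists_ne_ne_of_three_le (by simpa using hι) _ _
  rw [← commutatorElement_elementary (w := .inl i) (Ne.symm hiu) hiz huz]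
  exact Subgroup.commutator_mem_commutator (Subgroup.mem_top _) (Subgroup.mem_top _)

variable (R) in
/-- The pointwise stabiliser of the hyperbolic planes indexed by `S`. -/
def fixer (S : Finset ι) : Subgroup (splitOrthogonalGroup ι R) :=
  fixingSubgroup _ ((fun j => (Pi.single j 1 : ι ⊕ ι → R)) '' (plane ⁻¹' S))

variable (R) in
/-- The subgroup generated by the elementary isometries acting on the hyperbolic planes not indexed
by `S`. -/
def elementarySubgroup (S : Finset ι) : Subgroup (splitOrthogonalGroup ι R) :=
  Subgroup.closure {A | ∃ (u w : ι ⊕ ι) (h : plane u ≠ plane w) (c : R),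
    plane u ∉ S ∧ plane w ∉ S ∧ elementary h c = A}

variable {S : Finset ι}

theorem mem_fixer {A : splitOrthogonalGroup ι R} :
    A ∈ fixer R S ↔ ∀ j, plane j ∈ S → A • (Pi.single j 1 : ι ⊕ ι → R) = Pi.single j 1 := by
  simp only [fixer, mem_fixingSubgroup_iff, Set.forall_mem_image, Set.mem_preimage,
    Finset.mem_coe]

theorem smul_apply_of_mem_fixer {A : splitOrthogonalGroup ι R} (hA : A ∈ fixer R S) {j : ι ⊕ ι}
    (hj : plane j ∈ S) (v : ι ⊕ ι → R) : (A • v) j = v j := by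
  have h := smul_dotProduct_smul_comp_swap A v (Pi.single j.swap 1)
  rw [mem_fixer.mp hA _ (by rwa [plane_swap])] at h
  simpa [single_comp_swap] using h

theorem elementary_mem_elementarySubgroup {u w : ι ⊕ ι} (h : plane u ≠ plane w) (hu : plane u ∉ S)
    (hw : plane w ∉ S) (c : R) : elementary h c ∈ elementarySubgroup R S :=
  Subgroup.subset_closure ⟨u, w, h, c, hu, hw, rfl⟩

theorem elementarySubgroup_le_commutator (hι : 3 ≤ Fintype.card ι) :
    elementarySubgroup R S ≤ commutator (splitOrthogonalGroup ι R) := by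
  rw [elementarySubgroup, Subgroup.closure_le]
  rintro _ ⟨u, w, h, c, -, -, rfl⟩
  exact elementary_mem_commutator hι h c

theorem elementarySubgroup_le_fixer :
    elementarySubgroup R S ≤ fixer R S := by
  rw [elementarySubgroup, Subgroup.closure_le]
  rintro _ ⟨u, w, h, c, hu, hw, rfl⟩
  refine mem_fixer.mpr fun j hj => ?_
  have hju : u ≠ j := fun e => hu (e ▸ hj)
  have hjw : w.swap ≠ j := fun e => hw (plane_swap w ▸ e ▸ hj)
  simp [elementary_smul, hju, hjw]

section Transitivity

variable {v : ι ⊕ ι → R} {u : ι ⊕ ι}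

theorem eq_single_of_isotropic [IsDomain R] [NeZero (2 : R)]
    (hv : v ⬝ᵥ (v ∘ Sum.swap) = 0) (hvu : v u ≠ 0) (hoff : ∀ w, plane w ≠ plane u → v w = 0) :
    v = Pi.single u (v u) := by
  have hsupp : v = Pi.single u (v u) + Pi.single u.swap (v u.swap) := by
    ext w
    by_cases hw : plane w = plane u
    · obtain rfl | rfl := plane_eq_plane_iff.mp hw <;>
        simp [sum_swap_ne_self, (sum_swap_ne_self _).symm]
    · obtain ⟨h, h'⟩ := not_or.mp (plane_eq_plane_iff.not.mp hw)
      simp [hoff w hw, h, h']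
  have hswap : v u.swap = 0 := by
    have h : 2 * (v u * v u.swap) = 0 := by
      rw [← hv, two_mul]
      conv_rhs => rw [hsupp]
      simp [Pi.add_comp, single_comp_swap, sum_swap_ne_self, (sum_swap_ne_self _).symm, mul_comm]
    simpa [hvu, two_ne_zero] using h
  simpa [hswap] using hsupp

theorem exists_elementarySubgroup_smul_eq_ite (hu : plane u ∉ S) (T : Finset (ι ⊕ ι))
    (hT : ∀ w ∈ T, plane u ≠ plane w ∧ plane w ∉ S ∧ v u ∣ v w) :
    ∃ h ∈ elementarySubgroup R S, h • (Pi.single u.swap 1 : ι ⊕ ι → R) = Pi.single u.swap 1 ∧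
      (h • v) u = v u ∧ ∀ w, plane u ≠ plane w → (h • v) w = if w ∈ T then 0 else v w := by
  induction T using Finset.induction with
  | empty => exact ⟨1, one_mem _, by simp⟩
  | insert z T hz ih =>
    obtain ⟨h, hh, hfix, hpivot, hclear⟩ := ih fun w hw => hT w (Finset.mem_insert_of_mem hw)
    obtain ⟨huz, hzS, c, hc⟩ := hT z (Finset.mem_insert_self z T)
    have huz' : u ≠ z := fun e => huz (congrArg plane e)
    refine ⟨elementary huz (-c) * h, mul_mem (elementary_mem_elementarySubgroup _ hu hzS _) hh,
      ?_, ?_, fun w hw => ?_⟩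
    · rw [mul_smul, hfix, elementary_smul_single_swap]
    · simp [mul_smul, elementary_smul, hpivot, huz', (sum_swap_ne_self _).symm]
    · have hwu : w ≠ u.swap := by rintro rfl; exact hw (plane_swap u).symm
      by_cases hwz : w = z
      · subst hwz
        simp [mul_smul, elementary_smul, hwu, hpivot, hclear _ hw, hz, hc, mul_comm]
      · simp [mul_smul, elementary_smul, hwu, hclear w hw, hwz]

theorem exists_elementarySubgroup_smul_eq_single [IsDomain R] [NeZero (2 : R)] (hu : plane u ∉ S)
    (hv : v ⬝ᵥ (v ∘ Sum.swap) = 0) (hvS : ∀ w, plane w ∈ S → v w = 0) (hvu : v u ≠ 0)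
    (hdvd : ∀ w, plane u ≠ plane w → v u ∣ v w) :
    ∃ h ∈ elementarySubgroup R S, h • (Pi.single u.swap 1 : ι ⊕ ι → R) = Pi.single u.swap 1 ∧
      h • v = Pi.single u (v u) := by
  obtain ⟨h, hh, hfix, hpivot, hclear⟩ := exists_elementarySubgroup_smul_eq_ite hu
    {w | plane u ≠ plane w ∧ plane w ∉ S} (v := v) fun w hw => by
      obtain ⟨-, huw, hwS⟩ := Finset.mem_filter.mp hw
      exact ⟨huw, hwS, hdvd w huw⟩
  refine ⟨h, hh, hfix, ?_⟩
  rw [← hpivot] at hvu ⊢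
  refine eq_single_of_isotropic (by rw [smul_dotProduct_smul_comp_swap, hv]) hvu fun w hw => ?_
  rw [hclear w (Ne.symm hw)]
  by_cases hwS : plane w ∈ S
  · simp [hvS w hwS]
  · simp [Ne.symm hw, hwS]

theorem exists_elementarySubgroup_smul_single_eq_single_one (hu : plane u ∉ S) {w : ι ⊕ ι}
    (hw : plane w ∉ S) (huw : plane u ≠ plane w) (d : Rˣ) :
    ∃ h ∈ elementarySubgroup R S, h • (Pi.single u (d : R) : ι ⊕ ι → R) = Pi.single w 1 := by
  refine ⟨elementary huw.symm (-d : R) * elementary huw (↑d⁻¹ : R), mul_mem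
    (elementary_mem_elementarySubgroup _ hw hu _) (elementary_mem_elementarySubgroup _ hu hw _), ?_⟩
  obtain ⟨hne, hne'⟩ := not_or.mp (plane_eq_plane_iff.not.mp huw)
  have hne'' : u.swap ≠ w := sum_swap_eq_iff.not.mpr hne'
  simp [mul_smul, elementary_smul, Ne.symm hne, Ne.symm hne', hne'', sum_swap_ne_self,
    Pi.single_neg]

end Transitivity

end splitOrthogonalGroup

end SplitOrthogonal

section Euclidean

open scoped Matrix.Module

variable {ι R : Type*} [Fintype ι] [DecidableEq ι] [EuclideanDomain R] {S : Finset ι}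

namespace splitOrthogonalGroup

theorem exists_elementarySubgroup_smul_eq_single_of_ne_zero [NeZero (2 : R)] {v : ι ⊕ ι → R}
    (hv : v ⬝ᵥ (v ∘ Sum.swap) = 0) (hvS : ∀ w, plane w ∈ S → v w = 0) (hv0 : v ≠ 0) :
    ∃ h ∈ elementarySubgroup R S, ∃ u d, plane u ∉ S ∧ h • v = Pi.single u d := by
  obtain ⟨u, hvu : v u ≠ 0⟩ := Function.ne_iff.mp hv0
  clear hv0
  induction ha : v u using (EuclideanDomain.r_wellFounded (R := R)).induction generalizing u v with
  | h a ih =>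
    subst ha
    have hu : plane u ∉ S := fun huS => hvu (hvS u huS)
    by_cases hdvd : ∀ w, plane u ≠ plane w → v u ∣ v w
    · obtain ⟨h, hh, -, hv'⟩ := exists_elementarySubgroup_smul_eq_single hu hv hvS hvu hdvd
      exact ⟨h, hh, u, v u, hu, hv'⟩
    push Not at hdvd
    obtain ⟨w, huw, hnd⟩ := hdvd
    have hw : plane w ∉ S := fun hwS => hnd (hvS w hwS ▸ dvd_zero _)
    have he := elementary_mem_elementarySubgroup huw hu hw (-(v w / v u))
    have hmod : (elementary huw (-(v w / v u)) • v) w = v w % v u := by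
      have hwu : w ≠ u.swap := fun e => huw (e ▸ (plane_swap u).symm)
      rw [EuclideanDomain.mod_eq_sub_mul_div]
      simp only [elementary_smul, neg_mul, Pi.sub_apply, Pi.add_apply, Pi.single_eq_same, ne_eq,
        hwu, not_false_eq_true, Pi.single_eq_of_ne, sub_zero]
      ring
    obtain ⟨h, hh, u', d, hu', hv'⟩ := ih _ (EuclideanDomain.mod_lt (v w) hvu)
      (by rw [smul_dotProduct_smul_comp_swap, hv])
      (fun j hj => by rw [smul_apply_of_mem_fixer (elementarySubgroup_le_fixer he) hj, hvS j hj])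
      w (by rwa [hmod, ne_eq, EuclideanDomain.mod_eq_zero]) hmod
    exact ⟨h * _, mul_mem hh he, u', d, hu', by rw [mul_smul, hv']⟩

theorem exists_elementarySubgroup_mul_smul_single [NeZero (2 : R)] {A : splitOrthogonalGroup ι R}
    (hA : A ∈ fixer R S) {w : ι ⊕ ι} (hw : plane w ∉ S) {i : ι} (hi : i ∉ S) (hiw : i ≠ plane w) :
    ∃ h ∈ elementarySubgroup R S, (h * A) • (Pi.single w 1 : ι ⊕ ι → R) = Pi.single w 1 := by
  set v : ι ⊕ ι → R := A • Pi.single w 1 with hv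
  have hne {j : ι ⊕ ι} (hj : plane j ∈ S) : j ≠ w := fun e => hw (e ▸ hj)
  obtain ⟨h, hh, u, d, hu, hhv⟩ := exists_elementarySubgroup_smul_eq_single_of_ne_zero
    (S := S) (v := v)
    (by simp [hv, smul_dotProduct_smul_comp_swap, single_comp_swap, (sum_swap_ne_self _).symm])
    (fun j hj => by simp [hv, smul_apply_of_mem_fixer hA hj, hne hj])
    (by simp [hv, smul_eq_zero_iff_eq])
  have hd : IsUnit d := by
    have pairing := smul_dotProduct_smul_comp_swap (h * A) (Pi.single w 1) (Pi.single w.swap 1)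
    rw [mul_smul, ← hv, hhv] at pairing
    exact IsUnit.of_mul_eq_one _ (by simpa [single_comp_swap] using pairing)
  lift d to Rˣ using hd
  by_cases huw : plane u = plane w
  · obtain ⟨h₁, hh₁, h₁v⟩ := exists_elementarySubgroup_smul_single_eq_single_one hu (w := .inl i)
      hi (huw ▸ hiw.symm) d
    obtain ⟨h₂, hh₂, h₂v⟩ := exists_elementarySubgroup_smul_single_eq_single_one (u := .inl i)
      (w := w) hi hw hiw (1 : Rˣ)
    refine ⟨h₂ * h₁ * h, mul_mem (mul_mem hh₂ hh₁) hh, ?_⟩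
    rw [mul_smul, mul_smul, mul_smul, ← hv, hhv, h₁v, ← Units.val_one, h₂v, Units.val_one]
  · obtain ⟨h₁, hh₁, h₁v⟩ := exists_elementarySubgroup_smul_single_eq_single_one hu hw huw d
    exact ⟨h₁ * h, mul_mem hh₁ hh, by rw [mul_smul, mul_smul, ← hv, hhv, h₁v]⟩

theorem exists_elementarySubgroup_mul_mem_fixer_insert [NeZero (2 : R)]
    {A : splitOrthogonalGroup ι R} (hA : A ∈ fixer R S) {k i : ι} (hk : k ∉ S) (hi : i ∉ S)
    (hik : i ≠ k) : ∃ h ∈ elementarySubgroup R S, h * A ∈ fixer R (insert k S) := by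
  obtain ⟨h₁, hh₁, hinl⟩ :=
    exists_elementarySubgroup_mul_smul_single hA (w := .inl k) hk hi hik
  have hA₁ := mul_mem (elementarySubgroup_le_fixer hh₁) hA
  set v : ι ⊕ ι → R := (h₁ * A) • Pi.single (.inr k) 1 with hv
  have hvk : v (.inr k) = 1 := by
    have pairing :=
      smul_dotProduct_smul_comp_swap (h₁ * A) (Pi.single (.inl k) 1) (Pi.single (.inr k) 1)
    rw [hinl, ← hv] at pairing
    simpa [single_comp_swap] using pairing
  obtain ⟨h₂, hh₂, hfix, h₂v⟩ := exists_elementarySubgroup_smul_eq_single (u := .inr k) (S := S)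
    (v := v) hk (by simp [hv, smul_dotProduct_smul_comp_swap, single_comp_swap])
    (fun j hj => by
      have : j ≠ .inr k := by rintro rfl; exact hk hj
      simp [hv, smul_apply_of_mem_fixer hA₁ hj, this])
    (by simp [hvk]) (by simp [hvk])
  refine ⟨h₂ * h₁, mul_mem hh₂ hh₁, mem_fixer.mpr fun j hj => ?_⟩
  rw [mul_assoc, mul_smul]
  obtain rfl | hj := Finset.mem_insert.mp hj
  · rcases j with j | j
    · exact hinl.symm ▸ hfix
    · exact h₂v.trans (by rw [hvk]; rfl)
  · rw [mem_fixer.mp hA₁ j hj, mem_fixer.mp (elementarySubgroup_le_fixer hh₂) j hj]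

theorem exists_commutator_mul_mem_fixer [NeZero (2 : R)] (hι : 3 ≤ Fintype.card ι)
    (A : splitOrthogonalGroup ι R) {i : ι} (hi : i ∉ S) :
    ∃ h ∈ commutator (splitOrthogonalGroup ι R), h * A ∈ fixer R S := by
  induction S using Finset.induction with
  | empty => exact ⟨1, one_mem _, by simp [mem_fixer]⟩
  | insert k S hk ih =>
    obtain ⟨hik, hiS⟩ := not_or.mp (Finset.mem_insert.not.mp hi)
    obtain ⟨h, hh, hA⟩ := ih hiS
    obtain ⟨h', hh', hA'⟩ := exists_elementarySubgroup_mul_mem_fixer_insert hA hk hiS hik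
    exact ⟨h' * h, mul_mem (elementarySubgroup_le_commutator hι hh') hh, by rwa [mul_assoc]⟩

end splitOrthogonalGroup

end Euclidean

section HyperbolicPlane

open LieAlgebra.Orthogonal (JD)
open scoped Matrix.Module

variable {ι R : Type*} [Fintype ι] [DecidableEq ι] [CommRing R]

namespace splitOrthogonalGroup

/-- The element of the diagonal torus scaling the basis vector `inl i` by the unit `d i`. -/
noncomputable def torus (d : ι → Rˣ) : splitOrthogonalGroup ι R :=
  isometryGroup.ofMatrix isUnit_det_JD
    (diagonal (Sum.elim (fun i => (d i : R)) fun i => ↑(d i)⁻¹)) <| by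
      simp [JD, ← fromBlocks_diagonal, fromBlocks_transpose, fromBlocks_multiply]

theorem val_torus (d : ι → Rˣ) :
    (torus d).1.val = diagonal (Sum.elim (fun i => (d i : R)) fun i => ↑(d i)⁻¹) := rfl

theorem torus_one : torus (1 : ι → Rˣ) = 1 :=
  Subtype.ext (Units.ext (by simp [val_torus]))

theorem torus_smul_single_inl (d : ι → Rˣ) (i : ι) :
    torus d • (Pi.single (.inl i) 1 : ι ⊕ ι → R) = Pi.single (.inl i) (d i : R) := by
  simp [isometryGroup.smul_eq_mulVec, val_torus]

theorem torus_smul_single_inr (d : ι → Rˣ) (i : ι) :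
    torus d • (Pi.single (.inr i) 1 : ι ⊕ ι → R) = Pi.single (.inr i) (↑(d i)⁻¹ : R) := by
  simp [isometryGroup.smul_eq_mulVec, val_torus]

theorem det_torus (d : ι → Rˣ) : (torus d).1.det = 1 := by
  ext
  simp [val_torus, ← Finset.prod_mul_distrib]

variable (R) in
/-- The isometry exchanging the basis vectors `inl i` and `inr i`. -/
noncomputable def planeSwap (i : ι) : splitOrthogonalGroup ι R :=
  isometryGroup.ofMatrix isUnit_det_JD ((Equiv.swap (Sum.inl i) (Sum.inr i)).permMatrix R) <| by
    refine transpose_mul_mul_eq_iff.mpr fun v w => ?_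
    have swap_comm : ⇑(Equiv.swap (Sum.inl i) (Sum.inr i)) ∘ Sum.swap =
        Sum.swap ∘ ⇑(Equiv.swap (Sum.inl i) (Sum.inr i)) := by
      ext u
      rcases u with u | u <;> by_cases hu : u = i <;> simp [hu, Equiv.swap_apply_of_ne_of_ne]
    rw [permMatrix_mulVec, permMatrix_mulVec, JD_mulVec, JD_mulVec, Function.comp_assoc,
      swap_comm, ← Function.comp_assoc, comp_equiv_dotProduct_comp_equiv]

theorem val_planeSwap (i : ι) :
    (planeSwap R i).1.val = (Equiv.swap (Sum.inl i) (Sum.inr i)).permMatrix R := rfl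

theorem planeSwap_smul_single (i : ι) (j : ι ⊕ ι) (c : R) :
    planeSwap R i • (Pi.single j c : ι ⊕ ι → R) =
      Pi.single (Equiv.swap (Sum.inl i) (Sum.inr i) j) c := by
  rw [isometryGroup.smul_eq_mulVec, val_planeSwap, permMatrix_mulVec, Pi.single_comp_equiv,
    Equiv.symm_swap]

theorem det_planeSwap (i : ι) : (planeSwap R i).1.det = -1 := by
  ext
  simp [val_planeSwap, det_permutation]

theorem exists_smul_single_eq_single_of_mem_fixer [IsDomain R] [NeZero (2 : R)]
    {A : splitOrthogonalGroup ι R} {i : ι} (hA : A ∈ fixer R {i}ᶜ) {u : ι ⊕ ι}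
    (hu : plane u = i) :
    ∃ w d, plane w = i ∧ A • (Pi.single u 1 : ι ⊕ ι → R) = Pi.single w d := by
  set v : ι ⊕ ι → R := A • Pi.single u 1 with hv
  have hoff (w) (hw : plane w ≠ i) : v w = 0 := by
    have hwu : w ≠ u := fun e => hw (e ▸ hu)
    rw [hv, smul_apply_of_mem_fixer hA (by simpa using hw), Pi.single_eq_of_ne hwu]
  have hv0 : v ≠ 0 := by simp [hv, smul_eq_zero_iff_eq]
  obtain ⟨w, hw : v w ≠ 0⟩ := Function.ne_iff.mp hv0
  have hwi : plane w = i := of_not_not fun h => hw (hoff w h)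
  refine ⟨w, v w, hwi, eq_single_of_isotropic ?_ hw fun z hz => hoff z (hwi ▸ hz)⟩
  simp [hv, smul_dotProduct_smul_comp_swap, single_comp_swap, (sum_swap_ne_self _).symm]

theorem eq_of_mem_fixer_compl_singleton {A A' : splitOrthogonalGroup ι R} {i : ι}
    (hA : A ∈ fixer R {i}ᶜ) (hA' : A' ∈ fixer R {i}ᶜ)
    (hinl : A • (Pi.single (.inl i) 1 : ι ⊕ ι → R) = A' • Pi.single (.inl i) 1)
    (hinr : A • (Pi.single (.inr i) 1 : ι ⊕ ι → R) = A' • Pi.single (.inr i) 1) : A = A' := by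
  refine isometryGroup.ext_smul_single fun j => ?_
  by_cases hj : plane j = i
  · subst hj
    rcases j with j | j
    exacts [hinl, hinr]
  · have hj' : plane j ∈ ({i}ᶜ : Finset ι) := by simpa using hj
    rw [mem_fixer.mp hA j hj', mem_fixer.mp hA' j hj']

theorem torus_mulSingle_mem_fixer (i : ι) (d : Rˣ) :
    torus (Pi.mulSingle i d) ∈ fixer R {i}ᶜ := by
  refine mem_fixer.mpr fun j hj => ?_
  rcases j with j | j <;> have hji : j ≠ i := by simpa [plane] using hj
  · rw [torus_smul_single_inl, Pi.mulSingle_eq_of_ne hji, Units.val_one]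
  · rw [torus_smul_single_inr, Pi.mulSingle_eq_of_ne hji, inv_one, Units.val_one]

theorem planeSwap_mem_fixer (i : ι) : planeSwap R i ∈ fixer R {i}ᶜ := by
  refine mem_fixer.mpr fun j hj => ?_
  have hji : plane j ≠ i := by simpa using hj
  rw [planeSwap_smul_single, Equiv.swap_apply_of_ne_of_ne] <;> rintro rfl <;> exact hji rfl

theorem eq_torus_or_eq_planeSwap_mul_torus [IsDomain R] [NeZero (2 : R)]
    {A : splitOrthogonalGroup ι R} {i : ι} (hA : A ∈ fixer R {i}ᶜ) :
    ∃ d : Rˣ, A = torus (Pi.mulSingle i d) ∨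
      A = planeSwap R i * torus (Pi.mulSingle i d) := by
  obtain ⟨u, a, hu, hAl⟩ := exists_smul_single_eq_single_of_mem_fixer hA (u := .inl i) rfl
  obtain ⟨w, b, hw, hAr⟩ := exists_smul_single_eq_single_of_mem_fixer hA (u := .inr i) rfl
  have pairing := smul_dotProduct_smul_comp_swap A (Pi.single (.inl i) 1) (Pi.single (.inr i) 1)
  have hwu : w.swap = u := by
    by_contra h
    simp [hAl, hAr, single_comp_swap, h] at pairing
  subst hwu
  have hab : a * b = 1 := by simpa [hAl, hAr, single_comp_swap] using pairing
  let d : Rˣ := ⟨a, b, hab, mul_comm a b ▸ hab⟩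
  have ht := torus_mulSingle_mem_fixer (R := R) i d
  refine ⟨d, ?_⟩
  rcases w with j | j <;> obtain rfl : j = i := hw
  · refine .inr (eq_of_mem_fixer_compl_singleton hA (mul_mem (planeSwap_mem_fixer j) ht) ?_ ?_)
    · rw [hAl, mul_smul, torus_smul_single_inl, planeSwap_smul_single, Pi.mulSingle_eq_same,
        Equiv.swap_apply_left, Sum.swap_inl]
    · rw [hAr, mul_smul, torus_smul_single_inr, planeSwap_smul_single, Pi.mulSingle_eq_same,
        Equiv.swap_apply_right]
      rfl
  · refine .inl (eq_of_mem_fixer_compl_singleton hA ht ?_ ?_)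
    · rw [hAl, torus_smul_single_inl, Pi.mulSingle_eq_same, Sum.swap_inr]
    · rw [hAr, torus_smul_single_inr, Pi.mulSingle_eq_same]
      rfl

end splitOrthogonalGroup

end HyperbolicPlane

section Orientation

open LieAlgebra.Orthogonal (JD PD S indefiniteDiagonal jd_transform)

namespace splitOrthogonalGroup

variable {ι R : Type*} [Fintype ι] [DecidableEq ι] [CommRing R]

/-- Extension of scalars to `ℝ` along `f`, followed by the change of basis `PD` that diagonalizes
the split form, up to the factor `2` of `jd_transform`. -/
noncomputable def toIndefinite (f : R →+* ℝ) :
    splitOrthogonalGroup ι R →* isometryGroup (indefiniteDiagonal ι ι ℝ) :=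
  (((MulAut.conj (unitOfInvertible (PD ι ℝ))⁻¹).toMonoidHom.comp
    (GeneralLinearGroup.map f)).comp (Subgroup.subtype _)).codRestrict _ fun A => by
      have h := inv_mul_mul_mem_isometryGroup (unitOfInvertible (PD ι ℝ))
        (map_mem_isometryGroup f A.2)
      have hJD : (JD ι R).map f = JD ι ℝ := by simp [JD, fromBlocks_map]
      rw [hJD, val_unitOfInvertible, jd_transform, isometryGroup_smul (by simp)] at h
      simpa [S] using h

theorem toBlocks₁₁_toIndefinite (f : R →+* ℝ) (A : splitOrthogonalGroup ι R) :
    (toIndefinite f A).1.val.toBlocks₁₁ =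
      (2⁻¹ : ℝ) • (A.1.val.toBlocks₁₁ + A.1.val.toBlocks₁₂ + A.1.val.toBlocks₂₁ +
        A.1.val.toBlocks₂₂).map f := by
  have hval : (toIndefinite f A).1.val =
      (⅟(2 : ℝ) • (PD ι ℝ)ᵀ) * A.1.val.map f * PD ι ℝ := rfl
  rw [hval]
  conv_lhs => rw [← fromBlocks_toBlocks A.1.val]
  simp only [PD, fromBlocks_map, fromBlocks_multiply, fromBlocks_transpose, fromBlocks_smul,
    toBlocks_fromBlocks₁₁, transpose_one, smul_mul, Matrix.one_mul, Matrix.mul_one,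
    Matrix.map_add f (map_add f), smul_add, invOf_eq_inv]
  abel

/-- The character recording whether an isometry preserves the orientation of maximal positive
definite subspaces, after extending scalars to `ℝ` along `f`. -/
noncomputable def orientation (f : R →+* ℝ) : splitOrthogonalGroup ι R →* SignTypeˣ :=
  (isometryGroup.positiveOrientation.comp (toIndefinite f)).toHomUnits

theorem val_orientation (f : R →+* ℝ) (A : splitOrthogonalGroup ι R) :
    (orientation f A : SignType) = SignType.sign (toIndefinite f A).1.val.toBlocks₁₁.det := rfl

theorem orientation_torus_mulSingle_neg_one (f : R →+* ℝ) (i : ι) :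
    orientation f (torus (Pi.mulSingle i (-1))) = -1 := by
  have hblock : (toIndefinite f (torus (Pi.mulSingle i (-1)))).1.val.toBlocks₁₁ =
      diagonal (Pi.mulSingle i (-1)) := by
    rw [toBlocks₁₁_toIndefinite, val_torus, ← fromBlocks_diagonal]
    ext j k
    rcases eq_or_ne j k with rfl | hjk
    · rcases eq_or_ne j i with rfl | hji <;> norm_num [*]
    · simp [hjk]
  ext
  simp [val_orientation, hblock, Finset.prod_pi_mulSingle']

theorem orientation_planeSwap (f : R →+* ℝ) (i : ι) : orientation f (planeSwap R i) = 1 := by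
  have hsum : (planeSwap R i).1.val.toBlocks₁₁ + (planeSwap R i).1.val.toBlocks₁₂ +
      (planeSwap R i).1.val.toBlocks₂₁ + (planeSwap R i).1.val.toBlocks₂₂ = 1 + 1 := by
    ext j k
    rcases eq_or_ne j i with rfl | hji
    · simp [val_planeSwap, toBlocks₁₁, toBlocks₁₂, toBlocks₂₁, toBlocks₂₂, one_apply]
    · simp [val_planeSwap, toBlocks₁₁, toBlocks₁₂, toBlocks₂₁, toBlocks₂₂, one_apply,
        Equiv.swap_apply_of_ne_of_ne, hji]
  have hblock : (toIndefinite f (planeSwap R i)).1.val.toBlocks₁₁ = 1 := by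
    rw [toBlocks₁₁_toIndefinite, hsum, Matrix.map_add f (map_add f),
      Matrix.map_one f (map_zero f) (map_one f), ← two_smul ℝ, inv_smul_smul₀ two_ne_zero]
  ext
  simp [val_orientation, hblock]

end splitOrthogonalGroup

end Orientation

section Abelianization

namespace splitOrthogonalGroup

variable {ι : Type*} [Fintype ι] [DecidableEq ι]

variable (ι) in
/-- The pair of characters (determinant, orientation) cutting out the commutator subgroup of
`O_{ι,ι}(ℤ)`. -/
noncomputable def detOrientation : splitOrthogonalGroup ι ℤ →* ℤˣ × SignTypeˣ :=
  (GeneralLinearGroup.det.comp (Subgroup.subtype _)).prod (orientation (Int.castRingHom ℝ))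

theorem detOrientation_torus_mulSingle_neg_one (i : ι) :
    detOrientation ι (torus (Pi.mulSingle i (-1))) = (1, -1) :=
  Prod.ext (det_torus _) (orientation_torus_mulSingle_neg_one _ i)

theorem detOrientation_planeSwap (i : ι) : detOrientation ι (planeSwap ℤ i) = (-1, 1) :=
  Prod.ext (det_planeSwap i) (orientation_planeSwap _ i)

theorem detOrientation_surjective [Nonempty ι] : Function.Surjective (detOrientation ι) := by
  obtain ⟨i⟩ := ‹Nonempty ι›
  have eq_one_or (ε : SignTypeˣ) : ε = 1 ∨ ε = -1 := by decide +revert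
  rintro ⟨δ, ε⟩
  rcases Int.units_eq_one_or δ with rfl | rfl <;> rcases eq_one_or ε with rfl | rfl
  · exact ⟨1, map_one _⟩
  · exact ⟨_, detOrientation_torus_mulSingle_neg_one i⟩
  · exact ⟨_, detOrientation_planeSwap i⟩
  · refine ⟨planeSwap ℤ i * torus (Pi.mulSingle i (-1)), ?_⟩
    simp [detOrientation_planeSwap, detOrientation_torus_mulSingle_neg_one]

theorem eq_one_of_mem_fixer_of_detOrientation_eq_one {A : splitOrthogonalGroup ι ℤ} {i : ι}
    (hA : A ∈ fixer ℤ {i}ᶜ) (h : detOrientation ι A = 1) : A = 1 := by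
  have hdet : (-1 : ℤˣ) ≠ 1 := by decide
  have horientation : (-1 : SignTypeˣ) ≠ 1 := by decide
  obtain ⟨d, rfl | rfl⟩ := eq_torus_or_eq_planeSwap_mul_torus hA <;>
    obtain rfl | rfl := Int.units_eq_one_or d
  · rw [Pi.mulSingle_one, torus_one]
  all_goals
    simp [detOrientation_planeSwap, detOrientation_torus_mulSingle_neg_one, torus_one,
      Prod.ext_iff, hdet, horientation] at h

theorem ker_detOrientation (hι : 3 ≤ Fintype.card ι) :
    (detOrientation ι).ker = commutator (splitOrthogonalGroup ι ℤ) := by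
  obtain ⟨i⟩ : Nonempty ι := Fintype.card_pos_iff.mp (by omega)
  refine le_antisymm (fun A hA => ?_) (Abelianization.commutator_subset_ker _)
  obtain ⟨h, hh, hhA⟩ := exists_commutator_mul_mem_fixer hι A (S := {i}ᶜ) (i := i) (by simp)
  have hφ : detOrientation ι (h * A) = 1 :=
    mul_mem (Abelianization.commutator_subset_ker _ hh) hA
  rw [eq_inv_of_mul_eq_one_right (eq_one_of_mem_fixer_of_detOrientation_eq_one hhA hφ)]
  exact inv_mem hh

end splitOrthogonalGroup

end Abelianization

theorem abelianization_Ogg_general {ι : Type*} [Fintype ι] [DecidableEq ι]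
    (hι : 3 ≤ Fintype.card ι) :
    Nonempty (Abelianization (splitOrthogonalGroup ι ℤ) ≃* Multiplicative (ZMod 2 × ZMod 2)) := by
  have : Nonempty ι := Fintype.card_pos_iff.mp (by omega)
  have card_signTypeUnits : Nat.card SignTypeˣ = 2 := by
    rw [Nat.card_eq_fintype_card]
    rfl
  let abelianizationEquiv : Abelianization (splitOrthogonalGroup ι ℤ) ≃* ℤˣ × SignTypeˣ :=
    (QuotientGroup.quotientMulEquivOfEq (splitOrthogonalGroup.ker_detOrientation hι).symm).trans
      (QuotientGroup.quotientKerEquivOfSurjective _ splitOrthogonalGroup.detOrientation_surjective)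
  let intUnitsEquiv : ℤˣ ≃* Multiplicative (ZMod 2) :=
    mulEquivOfPrimeCardEq (p := 2) (by simp) (by simp)
  let signUnitsEquiv : SignTypeˣ ≃* Multiplicative (ZMod 2) :=
    mulEquivOfPrimeCardEq (p := 2) card_signTypeUnits (by simp)
  exact ⟨abelianizationEquiv.trans <| (intUnitsEquiv.prodCongr signUnitsEquiv).trans
    (MulEquiv.prodMultiplicative _ _).symm⟩

theorem Ogg_eq_splitOrthogonalGroup (g : ℕ) : Ogg g = splitOrthogonalGroup (Fin g) ℤ := rfl

/-- For every `g ≥ 5`, the abelianisation of `O_{g,g}(ℤ)` is isomorphic to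
`ℤ/2 × ℤ/2`. -/
theorem abelianization_Ogg (g : ℕ) (hg : 5 ≤ g) :
    Nonempty (Abelianization ↥(Ogg g) ≃* Multiplicative (ZMod 2 × ZMod 2)) := by
  rw [Ogg_eq_splitOrthogonalGroup]
  exact abelianization_Ogg_general (by rw [Fintype.card_fin]; omega)
end

section
/- For every g ≥ 3, the abelianisation of the group Sp^q_{2g}(ℤ) is a cyclic group of order 4. -/
open Matrix

/-!
By a Euclidean algorithm on vectors, `Sp^q` is generated by the quarter turns `rot i` of the
hyperbolic planes and the symmetric shears `shear i j t`. Given an index `k ≠ i, j`, the shear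
`shear i j t` is the commutator of `transvec i k 1` and `shear k j t`, so for `g ≥ 3` all shears and
transvections die in the abelianization. The rotations have order 4 and are conjugate under products
of transvections; hence the abelianization is cyclic of order dividing 4.

That the order is not smaller follows from a mod 4 version of the theta multiplier. If `X` and `Y`
are the coordinates of the Lagrangian frame `A e₁, …, A e_g`, then `det (X + i Y)` is the sum over
`S` of `i ^ |S|` times the determinant of `X` with the rows in `S` replaced by those of `Y`. Among
the terms whose determinant is a unit mod 4, the value mod 4 does not depend on `S`, because `q`
forces the symmetric matrix `Y X⁻¹` to have an even diagonal. Shears leave this common value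
unchanged and rotations multiply it by a power of `i` of exact order 4.
-/

namespace Spq

open Sum

variable {g : ℕ}

/-! ### The action on `ℤ²ᵍ` and the elementary generators -/

/-- The symplectic form `vᵀ J w`. -/
def pairing (v w : HypIdx g → ℤ) : ℤ := v ⬝ᵥ (Jmat g *ᵥ w)

theorem pairing_eq_sum (v w : HypIdx g → ℤ) :
    pairing v w = ∑ k, (v (inl k) * w (inr k) - v (inr k) * w (inl k)) := by
  simp [pairing, Jmat, Matrix.fromBlocks_mulVec, Matrix.neg_mulVec, dotProduct, sub_eq_add_neg,
    Finset.sum_add_distrib]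

theorem pairing_mulVec (A : Matrix (HypIdx g) (HypIdx g) ℤ) (v w : HypIdx g → ℤ) :
    pairing (A *ᵥ v) (A *ᵥ w) = v ⬝ᵥ ((Aᵀ * Jmat g * A) *ᵥ w) := by
  rw [pairing, dotProduct_comm, Matrix.dotProduct_mulVec, ← Matrix.mulVec_transpose,
    dotProduct_comm, Matrix.mulVec_mulVec, Matrix.mulVec_mulVec, Matrix.mul_assoc]

theorem coe_smul (A : Spq g) (v : HypIdx g → ℤ) : A • v = A.1.1 *ᵥ v := rfl

@[simp]
theorem pairing_smul_smul (A : Spq g) (v w : HypIdx g → ℤ) :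
    pairing (A • v) (A • w) = pairing v w := by
  rw [coe_smul, coe_smul, pairing_mulVec, A.2.1, pairing]

@[simp]
theorem qform_smul (A : Spq g) (v : HypIdx g → ℤ) : qform g (A • v) = qform g v := A.2.2 v

theorem ext_smul {A B : Spq g} (h : ∀ v : HypIdx g → ℤ, A • v = B • v) : A = B :=
  Subtype.ext <| Units.ext <| Matrix.ext_iff_mulVec.mpr h

theorem ext_smul_apply {A B : Spq g}
    (hl : ∀ (v : HypIdx g → ℤ) k, (A • v) (inl k) = (B • v) (inl k))
    (hr : ∀ (v : HypIdx g → ℤ) k, (A • v) (inr k) = (B • v) (inr k)) : A = B :=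
  ext_smul fun v ↦ funext (Sum.rec (hl v) (hr v))

/-- The element of `Sp^q` given by a linear automorphism preserving the pairing and `q`. -/
def ofLinearEquiv (φ : (HypIdx g → ℤ) ≃ₗ[ℤ] (HypIdx g → ℤ))
    (hpairing : ∀ v w, pairing (φ v) (φ w) = pairing v w)
    (hq : ∀ v, qform g (φ v) = qform g v) : Spq g :=
  ⟨GeneralLinearGroup.toLin.symm (LinearMap.GeneralLinearGroup.ofLinearEquiv φ), by
    have hφ (v) : LinearMap.toMatrix' φ.toLinearMap *ᵥ v = φ v := LinearMap.toMatrix'_mulVec _ v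
    refine ⟨Matrix.ext_iff_mulVec.mpr fun w ↦ ?_, fun v ↦ ?_⟩
    · refine dotProduct_eq _ _ fun v ↦ ?_
      rw [dotProduct_comm, dotProduct_comm _ v, ← pairing_mulVec]
      exact (congrArg₂ pairing (hφ v) (hφ w)).trans (hpairing v w)
    · exact (congrArg (qform g) (hφ v)).trans (hq v)⟩

@[simp]
theorem ofLinearEquiv_smul (φ : (HypIdx g → ℤ) ≃ₗ[ℤ] (HypIdx g → ℤ)) (hpairing hq)
    (v : HypIdx g → ℤ) : ofLinearEquiv φ hpairing hq • v = φ v :=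
  LinearMap.toMatrix'_mulVec _ v

/-- The quarter turn `(xᵢ, yᵢ) ↦ (-yᵢ, xᵢ)` of the `i`-th hyperbolic plane. -/
def rot (i : Fin g) : Spq g :=
  ofLinearEquiv
    { toFun v := Sum.elim (fun k ↦ if k = i then -v (inr k) else v (inl k))
        (fun k ↦ if k = i then v (inl k) else v (inr k))
      invFun v := Sum.elim (fun k ↦ if k = i then v (inr k) else v (inl k))
        (fun k ↦ if k = i then -v (inl k) else v (inr k))
      map_add' v w := by ext (k | k) <;> by_cases h : k = i <;> simp [h, add_comm]
      map_smul' c v := by ext (k | k) <;> by_cases h : k = i <;> simp [h]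
      left_inv v := by ext (k | k) <;> by_cases h : k = i <;> simp [h]
      right_inv v := by ext (k | k) <;> by_cases h : k = i <;> simp [h] }
    (fun v w ↦ by
      rw [pairing_eq_sum, pairing_eq_sum]
      refine Finset.sum_congr rfl fun k _ ↦ ?_
      by_cases h : k = i <;> simp [h, sub_eq_add_neg, mul_comm, add_comm])
    (fun v ↦ by
      rw [qform, qform]
      refine Finset.sum_congr rfl fun k _ ↦ ?_
      by_cases h : k = i <;> simp [h, ZMod.neg_eq_self_mod_two, mul_comm])

/-- The symmetric shear `xᵢ ↦ xᵢ + t yⱼ`, `xⱼ ↦ xⱼ + t yᵢ`. For `i = j` it is `xᵢ ↦ xᵢ + 2t yᵢ`. -/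
def shear (i j : Fin g) (t : ℤ) : Spq g :=
  ofLinearEquiv
    { toFun v := Sum.elim (fun k ↦ v (inl k) + ((if k = i then t * v (inr j) else 0)
          + if k = j then t * v (inr i) else 0)) (fun k ↦ v (inr k))
      invFun v := Sum.elim (fun k ↦ v (inl k) - ((if k = i then t * v (inr j) else 0)
          + if k = j then t * v (inr i) else 0)) (fun k ↦ v (inr k))
      map_add' v w := by
        ext (k | k)
        · simp only [Sum.elim_inl, Pi.add_apply]
          split_ifs <;> ring
        · rfl
      map_smul' c v := by
        ext (k | k)
        · simp only [Sum.elim_inl, Pi.smul_apply, smul_eq_mul, RingHom.id_apply]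
          split_ifs <;> ring
        · rfl
      left_inv v := by ext (k | k) <;> simp
      right_inv v := by ext (k | k) <;> simp }
    (fun v w ↦ by
      rw [pairing_eq_sum, pairing_eq_sum, ← sub_eq_zero, ← Finset.sum_sub_distrib]
      simp only [LinearEquiv.coe_mk, LinearMap.coe_mk, AddHom.coe_mk, elim_inl, elim_inr, add_mul,
        mul_add, ite_mul, mul_ite, zero_mul, mul_zero, add_sub_add_comm, add_sub_cancel_left,
        Finset.sum_add_distrib, Finset.sum_sub_distrib, Finset.sum_ite_eq', Finset.mem_univ,
        if_true]
      ring)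
    (fun v ↦ by
      simp only [qform]
      have : (t * v (inr j) * v (inr i) + t * v (inr i) * v (inr j) : ZMod 2) = 0 := by
        rw [mul_right_comm]; exact CharTwo.add_self_eq_zero _
      simp [add_mul, Finset.sum_add_distrib, this])

@[simp]
theorem rot_smul_inl (i : Fin g) (v : HypIdx g → ℤ) (k : Fin g) :
    (rot i • v) (inl k) = if k = i then -v (inr k) else v (inl k) := by
  simp [rot]

@[simp]
theorem rot_smul_inr (i : Fin g) (v : HypIdx g → ℤ) (k : Fin g) :
    (rot i • v) (inr k) = if k = i then v (inl k) else v (inr k) := by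
  simp [rot]

@[simp]
theorem shear_smul_inl (i j : Fin g) (t : ℤ) (v : HypIdx g → ℤ) (k : Fin g) :
    (shear i j t • v) (inl k) = v (inl k) + ((if k = i then t * v (inr j) else 0)
      + if k = j then t * v (inr i) else 0) := by
  simp [shear]

@[simp]
theorem shear_smul_inr (i j : Fin g) (t : ℤ) (v : HypIdx g → ℤ) (k : Fin g) :
    (shear i j t • v) (inr k) = v (inr k) := by
  simp [shear]

theorem rot_pow_four (i : Fin g) : rot i ^ 4 = 1 := by
  refine ext_smul_apply (fun v k ↦ ?_) fun v k ↦ ?_ <;> by_cases h : k = i <;>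
    simp [pow_succ, mul_smul, h]

theorem rot_inv (i : Fin g) : (rot i)⁻¹ = rot i ^ 3 :=
  inv_eq_of_mul_eq_one_left <| (pow_succ _ 3).symm.trans (rot_pow_four i)

theorem rot_inv_smul_inl (i : Fin g) (v : HypIdx g → ℤ) (k : Fin g) :
    ((rot i)⁻¹ • v) (inl k) = if k = i then v (inr k) else v (inl k) := by
  by_cases h : k = i <;> simp [rot_inv, pow_succ, mul_smul, h]

theorem rot_inv_smul_inr (i : Fin g) (v : HypIdx g → ℤ) (k : Fin g) :
    ((rot i)⁻¹ • v) (inr k) = if k = i then -v (inl k) else v (inr k) := by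
  by_cases h : k = i <;> simp [rot_inv, pow_succ, mul_smul, h]

theorem shear_neg_mul_shear (i j : Fin g) (t : ℤ) : shear i j (-t) * shear i j t = 1 := by
  refine ext_smul_apply (fun v k ↦ ?_) fun v k ↦ ?_
  · simp only [mul_smul, shear_smul_inl, shear_smul_inr, one_smul]
    split_ifs <;> ring
  · simp [mul_smul]

/-- The transvection `xᵢ ↦ xᵢ + t xⱼ`, `yⱼ ↦ yⱼ - t yᵢ`, for `i ≠ j`. -/
def transvec (i j : Fin g) (t : ℤ) : Spq g := (rot j)⁻¹ * shear i j t * rot j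

/-- The shear `yₐ ↦ yₐ + 2t xₐ`, opposite to `shear a a t`. -/
def lowerShear (a : Fin g) (t : ℤ) : Spq g := (rot a)⁻¹ * shear a a (-t) * rot a

/-- The signed transposition `xᵢ ↦ xⱼ ↦ -xᵢ`, `yᵢ ↦ yⱼ ↦ -yᵢ` of two planes, for `i ≠ j`. -/
def swap (i j : Fin g) : Spq g := transvec i j 1 * transvec j i (-1) * transvec i j 1

theorem transvec_smul_inl {i j : Fin g} (hij : i ≠ j) (t : ℤ) (v : HypIdx g → ℤ) (k : Fin g) :
    (transvec i j t • v) (inl k) = if k = i then v (inl i) + t * v (inl j) else v (inl k) := by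
  rcases eq_or_ne k j with rfl | hj <;> by_cases hi : k = i <;>
    simp_all [transvec, mul_smul, rot_inv_smul_inl]

theorem transvec_smul_inr {i j : Fin g} (hij : i ≠ j) (t : ℤ) (v : HypIdx g → ℤ) (k : Fin g) :
    (transvec i j t • v) (inr k) = if k = j then v (inr j) - t * v (inr i) else v (inr k) := by
  rcases eq_or_ne k j with rfl | hj <;> by_cases hi : k = i <;>
    simp_all [transvec, mul_smul, rot_inv_smul_inr, hij.symm, sub_eq_add_neg, add_comm]

@[simp]
theorem lowerShear_smul_inl (a : Fin g) (t : ℤ) (v : HypIdx g → ℤ) (k : Fin g) :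
    (lowerShear a t • v) (inl k) = v (inl k) := by
  by_cases h : k = a <;> simp [lowerShear, mul_smul, rot_inv_smul_inl, h]

@[simp]
theorem lowerShear_smul_inr (a : Fin g) (t : ℤ) (v : HypIdx g → ℤ) (k : Fin g) :
    (lowerShear a t • v) (inr k) = if k = a then v (inr a) + 2 * t * v (inl a) else v (inr k) := by
  by_cases h : k = a <;>
    simp [lowerShear, mul_smul, rot_inv_smul_inr, h, two_mul, add_mul, add_comm]

theorem swap_smul_inl {i j : Fin g} (hij : i ≠ j) (v : HypIdx g → ℤ) (k : Fin g) :
    (swap i j • v) (inl k) =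
      if k = i then v (inl j) else if k = j then -v (inl i) else v (inl k) := by
  rcases eq_or_ne k j with rfl | hj <;> by_cases hi : k = i <;>
    simp_all [swap, mul_smul, transvec_smul_inl, hij.symm]

theorem swap_smul_inr {i j : Fin g} (hij : i ≠ j) (v : HypIdx g → ℤ) (k : Fin g) :
    (swap i j • v) (inr k) =
      if k = i then v (inr j) else if k = j then -v (inr i) else v (inr k) := by
  rcases eq_or_ne k j with rfl | hj <;> by_cases hi : k = i <;>
    simp_all [swap, mul_smul, transvec_smul_inr, hij.symm]

/-! ### Elementary generation -/

/-- The subgroup generated by the rotations and shears in the planes with index in `S`. -/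
def elementary (S : Finset (Fin g)) : Subgroup (Spq g) :=
  Subgroup.closure ({A | ∃ i ∈ S, A = rot i} ∪ {A | ∃ i ∈ S, ∃ j ∈ S, ∃ t, A = shear i j t})

/-- The subgroup fixing the coordinates `xₖ`, `yₖ` of every vector for `k ∉ S`. -/
def coordFixer (S : Finset (Fin g)) : Subgroup (Spq g) where
  carrier := {A | ∀ k ∉ S, ∀ v : HypIdx g → ℤ,
    (A • v) (inl k) = v (inl k) ∧ (A • v) (inr k) = v (inr k)}
  one_mem' k _ v := by simp
  mul_mem' {A B} hA hB k hk v := by simp [mul_smul, hA k hk, hB k hk]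
  inv_mem' {A} hA k hk v := by simpa [eq_comm] using hA k hk (A⁻¹ • v)

/-- `v` lies in the span of the hyperbolic planes with index in `S`. -/
def SupportedOn (S : Finset (Fin g)) (v : HypIdx g → ℤ) : Prop :=
  ∀ k ∉ S, v (inl k) = 0 ∧ v (inr k) = 0

/-- The basis vector `eₐ`, with `xₐ = 1`. -/
abbrev eVec (a : Fin g) : HypIdx g → ℤ := Pi.single (inl a) 1

/-- The basis vector `fₐ`, with `yₐ = 1`. -/
abbrev fVec (a : Fin g) : HypIdx g → ℤ := Pi.single (inr a) 1

theorem pairing_eVec (v : HypIdx g → ℤ) (a : Fin g) : pairing v (eVec a) = -v (inr a) := by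
  simp [pairing_eq_sum, Pi.single_apply]

theorem pairing_fVec (v : HypIdx g → ℤ) (a : Fin g) : pairing v (fVec a) = v (inl a) := by
  simp [pairing_eq_sum, Pi.single_apply]

theorem rot_mem_elementary {S : Finset (Fin g)} {i : Fin g} (hi : i ∈ S) :
    rot i ∈ elementary S :=
  Subgroup.subset_closure (Or.inl ⟨i, hi, rfl⟩)

theorem shear_mem_elementary {S : Finset (Fin g)} {i j : Fin g} (hi : i ∈ S) (hj : j ∈ S) (t : ℤ) :
    shear i j t ∈ elementary S :=
  Subgroup.subset_closure (Or.inr ⟨i, hi, j, hj, t, rfl⟩)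

theorem transvec_mem_elementary {S : Finset (Fin g)} {i j : Fin g} (hi : i ∈ S) (hj : j ∈ S)
    (t : ℤ) : transvec i j t ∈ elementary S :=
  mul_mem (mul_mem (inv_mem (rot_mem_elementary hj)) (shear_mem_elementary hi hj t))
    (rot_mem_elementary hj)

theorem lowerShear_mem_elementary {S : Finset (Fin g)} {a : Fin g} (ha : a ∈ S) (t : ℤ) :
    lowerShear a t ∈ elementary S :=
  mul_mem (mul_mem (inv_mem (rot_mem_elementary ha)) (shear_mem_elementary ha ha _))
    (rot_mem_elementary ha)

theorem swap_mem_elementary {S : Finset (Fin g)} {i j : Fin g} (hi : i ∈ S) (hj : j ∈ S) :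
    swap i j ∈ elementary S :=
  mul_mem (mul_mem (transvec_mem_elementary hi hj _) (transvec_mem_elementary hj hi _))
    (transvec_mem_elementary hi hj _)

theorem elementary_mono {S T : Finset (Fin g)} (h : S ⊆ T) : elementary S ≤ elementary T := by
  refine Subgroup.closure_mono (Set.union_subset_union ?_ ?_)
  · rintro _ ⟨i, hi, rfl⟩
    exact ⟨i, h hi, rfl⟩
  · rintro _ ⟨i, hi, j, hj, t, rfl⟩
    exact ⟨i, h hi, j, h hj, t, rfl⟩

theorem elementary_le_coordFixer (S : Finset (Fin g)) : elementary S ≤ coordFixer S := by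
  refine (Subgroup.closure_le _).mpr (Set.union_subset ?_ ?_)
  · rintro _ ⟨i, hi, rfl⟩ k hk v
    have hki : k ≠ i := fun h ↦ hk (h ▸ hi)
    simp [hki]
  · rintro _ ⟨i, hi, j, hj, t, rfl⟩ k hk v
    have hki : k ≠ i := fun h ↦ hk (h ▸ hi)
    have hkj : k ≠ j := fun h ↦ hk (h ▸ hj)
    simp [hki, hkj]

theorem SupportedOn.smul {S : Finset (Fin g)} {w : HypIdx g → ℤ} (hw : SupportedOn S w)
    {A : Spq g} (hA : A ∈ coordFixer S) : SupportedOn S (A • w) := fun k hk ↦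
  ⟨(hA k hk w).1.trans (hw k hk).1, (hA k hk w).2.trans (hw k hk).2⟩

theorem supportedOn_eVec {S : Finset (Fin g)} {a : Fin g} (ha : a ∈ S) :
    SupportedOn S (eVec a) := fun k hk ↦ by
  have : k ≠ a := fun h ↦ hk (h ▸ ha)
  simp [this]

theorem supportedOn_fVec {S : Finset (Fin g)} {a : Fin g} (ha : a ∈ S) :
    SupportedOn S (fVec a) := fun k hk ↦ by
  have : k ≠ a := fun h ↦ hk (h ▸ ha)
  simp [this]

theorem transvec_smul_fVec {a c : Fin g} (hca : c ≠ a) (t : ℤ) :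
    transvec c a t • fVec a = fVec a := by
  ext (k | k)
  · simp [transvec_smul_inl hca]
  · by_cases hk : k = a <;> simp [transvec_smul_inr hca, hk, hca]

theorem rot_smul_fVec {a c : Fin g} (hca : c ≠ a) : rot c • fVec a = fVec a := by
  ext (k | k)
  · by_cases hk : k = c <;> simp [hk, hca]
  · by_cases hk : k = c <;> simp [hk, hca]

theorem lowerShear_smul_fVec (a : Fin g) (t : ℤ) : lowerShear a t • fVec a = fVec a := by
  ext (k | k)
  · simp
  · by_cases hk : k = a <;> simp [hk]

/-- One transvection clears `x_c`, and after a rotation of the plane another one clears `y_c`. -/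
theorem exists_clear_plane {S : Finset (Fin g)} {a c : Fin g} (ha : a ∈ S) (hc : c ∈ S)
    (hca : c ≠ a) {w : HypIdx g → ℤ} (hx : w (inl a) ∣ w (inl c)) (hy : w (inl a) ∣ w (inr c)) :
    ∃ h ∈ elementary S, h • fVec a = fVec a ∧ (h • w) (inl a) = w (inl a) ∧
      ∀ k ≠ a, (h • w) (inl k) = (if k = c then 0 else w (inl k)) ∧
        (h • w) (inr k) = if k = c then 0 else w (inr k) := by
  obtain ⟨s, hs⟩ := hx
  obtain ⟨t, ht⟩ := hy
  refine ⟨transvec c a t * rot c * transvec c a (-s),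
    mul_mem (mul_mem (transvec_mem_elementary hc ha _) (rot_mem_elementary hc))
      (transvec_mem_elementary hc ha _), ?_, ?_, fun k hka ↦ ?_⟩
  · simp only [mul_smul, transvec_smul_fVec hca, rot_smul_fVec hca]
  · simp [mul_smul, transvec_smul_inl hca, hca.symm]
  · by_cases hkc : k = c
    · subst hkc
      constructor <;>
        simp [mul_smul, transvec_smul_inl hca, transvec_smul_inr hca, hs, ht, hca, hca.symm,
          mul_comm]
    · simp [mul_smul, transvec_smul_inl hca, transvec_smul_inr hca, hka, hkc]

theorem exists_clear_planes {S : Finset (Fin g)} {a : Fin g} (ha : a ∈ S) {w : HypIdx g → ℤ}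
    (T : Finset (Fin g)) (hTS : T ⊆ S) (haT : a ∉ T)
    (hdvd : ∀ c ∈ T, w (inl a) ∣ w (inl c) ∧ w (inl a) ∣ w (inr c)) :
    ∃ h ∈ elementary S, h • fVec a = fVec a ∧ (h • w) (inl a) = w (inl a) ∧
      ∀ k ≠ a, (h • w) (inl k) = (if k ∈ T then 0 else w (inl k)) ∧
        (h • w) (inr k) = if k ∈ T then 0 else w (inr k) := by
  induction T using Finset.induction_on with
  | empty => exact ⟨1, one_mem _, by simp⟩
  | insert c T hcT ih =>
    have hca : c ≠ a := fun h ↦ haT (h ▸ Finset.mem_insert_self c T)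
    obtain ⟨h, hh, hf, hwa, hw⟩ := ih ((Finset.subset_insert c T).trans hTS)
      (fun h ↦ haT (Finset.mem_insert_of_mem h)) fun k hk ↦ hdvd k (Finset.mem_insert_of_mem hk)
    have hwc : (h • w) (inl c) = w (inl c) ∧ (h • w) (inr c) = w (inr c) := by
      simpa [hcT] using hw c hca
    obtain ⟨hdx, hdy⟩ := hdvd c (Finset.mem_insert_self c T)
    obtain ⟨h', hh', hf', hwa', hw'⟩ := exists_clear_plane ha (hTS (Finset.mem_insert_self c T)) hca
      (w := h • w) (by rwa [hwa, hwc.1]) (by rwa [hwa, hwc.2])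
    refine ⟨h' * h, mul_mem hh' hh, by rw [mul_smul, hf, hf'], by rw [mul_smul, hwa', hwa],
      fun k hk ↦ ?_⟩
    rw [mul_smul, (hw' k hk).1, (hw' k hk).2, (hw k hk).1, (hw k hk).2]
    by_cases hkc : k = c <;> simp [hkc]

theorem exists_clear_of_dvd {S : Finset (Fin g)} {a : Fin g} (ha : a ∈ S) {w : HypIdx g → ℤ}
    (hw : SupportedOn S w)
    (hdvd : ∀ c ∈ S, c ≠ a → w (inl a) ∣ w (inl c) ∧ w (inl a) ∣ w (inr c)) :
    ∃ h ∈ elementary S, h • fVec a = fVec a ∧ (h • w) (inl a) = w (inl a) ∧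
      SupportedOn {a} (h • w) := by
  obtain ⟨h, hh, hf, hwa, hwk⟩ := exists_clear_planes ha (S.erase a) (S.erase_subset a)
    (S.notMem_erase a) fun c hc ↦ hdvd c (Finset.mem_of_mem_erase hc) (Finset.ne_of_mem_erase hc)
  refine ⟨h, hh, hf, hwa, fun k hk ↦ ?_⟩
  have hka : k ≠ a := by simpa using hk
  rw [(hwk k hka).1, (hwk k hka).2]
  by_cases hkS : k ∈ S
  · simp [hka, hkS]
  · simp [hkS, hw k hkS]

theorem qform_of_supportedOn_singleton {a : Fin g} {w : HypIdx g → ℤ} (hw : SupportedOn {a} w) :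
    qform g w = ((w (inl a) * w (inr a) : ℤ) : ZMod 2) :=
  Finset.sum_eq_single a (fun k _ hk ↦ by simp [(hw k (by simpa using hk)).1]) (by simp)

theorem exists_smul_eq_single {S : Finset (Fin g)} {a : Fin g} (ha : a ∈ S) {w : HypIdx g → ℤ}
    (hw : SupportedOn S w) (hq : qform g w = 0) (hunit : IsUnit (w (inl a))) :
    ∃ h ∈ elementary S, h • fVec a = fVec a ∧ h • w = Pi.single (inl a) (w (inl a)) := by
  obtain ⟨h, hh, hf, hwa, hsupp⟩ := exists_clear_of_dvd ha hw fun _ _ _ ↦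
    ⟨hunit.dvd, hunit.dvd⟩
  obtain ⟨m, hm⟩ : (2 : ℤ) ∣ (h • w) (inr a) := by
    rw [← qform_smul h, qform_of_supportedOn_singleton hsupp, hwa,
      ZMod.intCast_zmod_eq_zero_iff_dvd _ 2] at hq
    exact hunit.dvd_mul_left.mp hq
  refine ⟨lowerShear a (-m * w (inl a)) * h, mul_mem (lowerShear_mem_elementary ha _) hh,
    by rw [mul_smul, hf, lowerShear_smul_fVec], ?_⟩
  have hsq : w (inl a) * w (inl a) = 1 := by
    rcases Int.isUnit_iff.mp hunit with h1 | h1 <;> simp [h1]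
  ext (k | k) <;> rcases eq_or_ne k a with rfl | hk
  · simp [mul_smul, hwa]
  · simp [mul_smul, hk, (hsupp k (by simpa using hk)).1]
  · simp only [mul_smul, lowerShear_smul_inr, if_true, hm, hwa, Pi.single_apply, reduceCtorEq,
      if_false]
    linear_combination -2 * m * hsq
  · simp [mul_smul, hk, (hsupp k (by simpa using hk)).2]

/-- `w (inl a)` is nonzero and minimal in absolute value among the nonzero entries of the vectors
in the `elementary S`-orbit of `w`. -/
def IsMinimalAt (S : Finset (Fin g)) (a : Fin g) (w : HypIdx g → ℤ) : Prop :=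
  w (inl a) ≠ 0 ∧ ∀ h ∈ elementary S, ∀ c, (h • w) c ≠ 0 → |w (inl a)| ≤ |(h • w) c|

theorem IsMinimalAt.smul {S : Finset (Fin g)} {a : Fin g} {w : HypIdx g → ℤ}
    (hmin : IsMinimalAt S a w) {h : Spq g} (hh : h ∈ elementary S)
    (hwa : (h • w) (inl a) = w (inl a)) : IsMinimalAt S a (h • w) := by
  refine ⟨hwa ▸ hmin.1, fun h' hh' c ↦ ?_⟩
  rw [hwa, ← mul_smul]
  exact hmin.2 _ (mul_mem hh' hh) c

theorem exists_smul_inl_eq {S : Finset (Fin g)} {a b : Fin g} (ha : a ∈ S) (hb : b ∈ S) :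
    ∃ h ∈ elementary S, ∀ w : HypIdx g → ℤ, (h • w) (inl a) = w (inl b) := by
  rcases eq_or_ne a b with rfl | hab
  · exact ⟨1, one_mem _, by simp⟩
  · exact ⟨swap a b, swap_mem_elementary ha hb, fun w ↦ by simp [swap_smul_inl hab]⟩

theorem exists_isMinimalAt_smul {S : Finset (Fin g)} {a : Fin g} (ha : a ∈ S) {w : HypIdx g → ℤ}
    (hw : SupportedOn S w) (hw0 : w ≠ 0) : ∃ h ∈ elementary S, IsMinimalAt S a (h • w) := by
  obtain ⟨c₀, hc₀⟩ := Function.ne_iff.mp hw0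
  obtain ⟨⟨h, c⟩, ⟨hh, hc⟩, hmin⟩ := WellFounded.has_min
    (measure fun p : Spq g × HypIdx g ↦ ((p.1 • w) p.2).natAbs).wf
    {p | p.1 ∈ elementary S ∧ (p.1 • w) p.2 ≠ 0} ⟨(1, c₀), one_mem _, by simpa using hc₀⟩
  have hsupp := hw.smul (elementary_le_coordFixer S hh)
  obtain ⟨h', hh', hmove⟩ : ∃ h' ∈ elementary S, ((h' * h) • w) (inl a) = (h • w) c := by
    rcases c with b | b
    · have hb : b ∈ S := by by_contra hb; exact hc (hsupp b hb).1
      obtain ⟨h', hh', hmove⟩ := exists_smul_inl_eq ha hb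
      exact ⟨h', hh', by rw [mul_smul, hmove]⟩
    · have hb : b ∈ S := by by_contra hb; exact hc (hsupp b hb).2
      obtain ⟨h', hh', hmove⟩ := exists_smul_inl_eq ha hb
      refine ⟨h' * (rot b)⁻¹, mul_mem hh' (inv_mem (rot_mem_elementary hb)), ?_⟩
      rw [mul_smul, mul_smul, hmove, rot_inv_smul_inl, if_pos rfl]
  refine ⟨h' * h, mul_mem hh' hh, by rwa [hmove], fun k hk d hd ↦ ?_⟩
  rw [hmove, Int.abs_eq_natAbs, Int.abs_eq_natAbs, Nat.cast_le]
  rw [← mul_smul] at hd ⊢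
  exact not_lt.mp (hmin (k * (h' * h), d) ⟨mul_mem hk (mul_mem hh' hh), hd⟩)

theorem IsMinimalAt.dvd {S : Finset (Fin g)} {a : Fin g} {w : HypIdx g → ℤ}
    (hmin : IsMinimalAt S a w) {x : ℤ}
    (hx : ∀ t : ℤ, ∃ h ∈ elementary S, ∃ c, (h • w) c = x + t * w (inl a)) : w (inl a) ∣ x := by
  obtain ⟨h, hh, c, hc⟩ := hx (-(x / w (inl a)))
  have hmod : (h • w) c = x % w (inl a) := by rw [hc, Int.emod_def]; ring
  by_contra hdvd
  have hlt := Int.emod_lt_abs x hmin.1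
  have hle := hmin.2 h hh c (by rwa [hmod, Ne, ← Int.dvd_iff_emod_eq_zero])
  rw [hmod, abs_of_nonneg (Int.emod_nonneg x hmin.1)] at hle
  exact hle.not_gt hlt

theorem IsMinimalAt.dvd_plane {S : Finset (Fin g)} {a c : Fin g} {w : HypIdx g → ℤ}
    (hmin : IsMinimalAt S a w) (ha : a ∈ S) (hc : c ∈ S) (hca : c ≠ a) :
    w (inl a) ∣ w (inl c) ∧ w (inl a) ∣ w (inr c) := by
  refine ⟨hmin.dvd fun t ↦ ⟨transvec c a t, transvec_mem_elementary hc ha t, inl c, ?_⟩,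
    hmin.dvd fun t ↦ ⟨transvec c a t * (rot c)⁻¹,
      mul_mem (transvec_mem_elementary hc ha t) (inv_mem (rot_mem_elementary hc)), inl c, ?_⟩⟩
  · simp [transvec_smul_inl hca]
  · simp [mul_smul, transvec_smul_inl hca, rot_inv_smul_inl, hca.symm]

/-- Only reduction of `yₐ` modulo `2 xₐ` is available. It gives `|yₐ| ≤ |xₐ|`, so by minimality `yₐ`
becomes `0` or `±xₐ`. -/
theorem IsMinimalAt.dvd_inr {S : Finset (Fin g)} {a : Fin g} {w : HypIdx g → ℤ}
    (hmin : IsMinimalAt S a w) (ha : a ∈ S) : w (inl a) ∣ w (inr a) := by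
  set x := w (inl a) with hx
  set y := w (inr a) with hy
  have hx0 : 2 * x ≠ 0 := mul_ne_zero two_ne_zero hmin.1
  set t := -((y + |x|) / (2 * x)) with ht
  have hr : y + 2 * t * x = (y + |x|) % (2 * x) - |x| := by rw [ht, Int.emod_def]; ring
  have hrx : |y + 2 * t * x| ≤ |x| := by
    have h1 := Int.emod_nonneg (y + |x|) hx0
    have h2 := Int.emod_lt_abs (y + |x|) hx0
    rw [abs_mul, abs_two] at h2
    rw [hr, abs_le]
    constructor <;> linarith
  have hdvd : x ∣ y + 2 * t * x := by
    have hy' : (lowerShear a t • w) (inr a) = y + 2 * t * x := by simp [hx, hy]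
    rcases eq_or_ne (y + 2 * t * x) 0 with h0 | h0
    · rw [h0]; exact dvd_zero x
    · have hge := hmin.2 _ (lowerShear_mem_elementary ha t) (inr a) (by rwa [hy'])
      rw [hy'] at hge
      exact (abs_dvd_abs _ _).mp (hge.antisymm hrx ▸ dvd_rfl)
  exact (dvd_add_left (dvd_mul_left x (2 * t))).mp hdvd

theorem exists_isUnit_smul {S : Finset (Fin g)} {a : Fin g} (ha : a ∈ S) {w u : HypIdx g → ℤ}
    (hw : SupportedOn S w) (hwu : pairing w u = 1) :
    ∃ h ∈ elementary S, IsUnit ((h • w) (inl a)) := by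
  have hw0 : w ≠ 0 := by rintro rfl; simp [pairing] at hwu
  obtain ⟨h, hh, hmin⟩ := exists_isMinimalAt_smul ha hw hw0
  obtain ⟨h', hh', -, hwa, hsupp⟩ := exists_clear_of_dvd ha
    (hw.smul (elementary_le_coordFixer S hh)) fun c hc hca ↦ hmin.dvd_plane ha hc hca
  have hdvd := (hmin.smul hh' hwa).dvd_inr ha
  rw [← mul_smul] at hsupp hdvd
  refine ⟨h' * h, mul_mem hh' hh, isUnit_of_dvd_one ?_⟩
  rw [← hwu, ← pairing_smul_smul (h' * h), pairing_eq_sum]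
  refine Finset.dvd_sum fun k _ ↦ ?_
  rcases eq_or_ne k a with rfl | hk
  · exact dvd_sub (dvd_mul_right _ _) (hdvd.mul_right _)
  · simp [hsupp k (by simpa using hk)]

theorem exists_smul_eq_fVec {S : Finset (Fin g)} {a : Fin g} (ha : a ∈ S) {w u : HypIdx g → ℤ}
    (hw : SupportedOn S w) (hwu : pairing w u = 1) (hq : qform g w = 0) :
    ∃ h ∈ elementary S, h • w = fVec a := by
  obtain ⟨h, hh, hunit⟩ := exists_isUnit_smul ha hw hwu
  obtain ⟨h', hh', -, hsingle⟩ := exists_smul_eq_single ha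
    (hw.smul (elementary_le_coordFixer S hh)) (by rwa [qform_smul]) hunit
  rcases Int.isUnit_iff.mp hunit with h1 | h1
  · refine ⟨rot a * h' * h, mul_mem (mul_mem (rot_mem_elementary ha) hh') hh, ?_⟩
    rw [mul_smul, mul_smul, hsingle, h1]
    ext (k | k) <;> by_cases hk : k = a <;> simp [hk]
  · refine ⟨(rot a)⁻¹ * h' * h, mul_mem (mul_mem (inv_mem (rot_mem_elementary ha)) hh') hh, ?_⟩
    rw [mul_smul, mul_smul, hsingle, h1]
    ext (k | k) <;> by_cases hk : k = a <;> simp [rot_inv_smul_inl, rot_inv_smul_inr, hk]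

theorem mem_coordFixer_of_insert {S : Finset (Fin g)} {a : Fin g} {A : Spq g}
    (hA : A ∈ coordFixer (insert a S)) (he : A • eVec a = eVec a) (hf : A • fVec a = fVec a) :
    A ∈ coordFixer S := fun k hk v ↦ by
  rcases eq_or_ne k a with rfl | hka
  · have hinr := pairing_smul_smul A v (eVec k)
    have hinl := pairing_smul_smul A v (fVec k)
    rw [he, pairing_eVec, pairing_eVec, neg_inj] at hinr
    rw [hf, pairing_fVec, pairing_fVec] at hinl
    exact ⟨hinl, hinr⟩
  · exact hA k (by simp [hka, hk]) v

theorem exists_mul_mem_coordFixer {S : Finset (Fin g)} {a : Fin g} {A : Spq g}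
    (hA : A ∈ coordFixer (insert a S)) :
    ∃ h ∈ elementary (insert a S), h * A ∈ coordFixer S := by
  have ha := Finset.mem_insert_self a S
  obtain ⟨h, hh, hf⟩ := exists_smul_eq_fVec (u := A • -eVec a) ha ((supportedOn_fVec ha).smul hA)
    (by rw [pairing_smul_smul]; simp [pairing_eq_sum, Pi.single_apply])
    (by rw [qform_smul]; simp [qform])
  have hB : h * A ∈ coordFixer (insert a S) := mul_mem (elementary_le_coordFixer _ hh) hA
  rw [← mul_smul] at hf
  have hea : ((h * A) • eVec a) (inl a) = 1 := by
    rw [← pairing_fVec ((h * A) • eVec a), ← hf, pairing_smul_smul, pairing_fVec]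
    exact Pi.single_eq_same _ _
  obtain ⟨h', hh', hf', he'⟩ := exists_smul_eq_single ha ((supportedOn_eVec ha).smul hB)
    (by rw [qform_smul]; simp [qform]) (hea ▸ isUnit_one)
  refine ⟨h' * h, mul_mem hh' hh, mem_coordFixer_of_insert (a := a) ?_ ?_ ?_⟩ <;>
    rw [mul_assoc]
  · exact mul_mem (elementary_le_coordFixer _ hh') hB
  · rw [mul_smul, he', hea]
  · rw [mul_smul, hf, hf']

theorem coordFixer_le_elementary (S : Finset (Fin g)) : coordFixer S ≤ elementary S := by
  induction S using Finset.induction_on with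
  | empty =>
    intro A hA
    have : A = 1 := ext_smul_apply (fun v k ↦ by simp [hA k (by simp) v])
      fun v k ↦ by simp [hA k (by simp) v]
    exact this ▸ one_mem _
  | insert a S _ ih =>
    intro A hA
    obtain ⟨h, hh, hC⟩ := exists_mul_mem_coordFixer hA
    exact (Subgroup.mul_mem_cancel_left _ hh).mp (elementary_mono (S.subset_insert a) (ih hC))

theorem elementary_univ : elementary (Finset.univ : Finset (Fin g)) = ⊤ :=
  top_le_iff.mp fun _ _ ↦ coordFixer_le_elementary _ (fun k hk ↦ absurd (Finset.mem_univ k) hk)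

/-! ### The phase of an even Lagrangian frame modulo 4 -/

section EvenForm

variable {ι R : Type*} [CommRing R]

/-- A matrix of the form `U + Uᵀ`: symmetric with even diagonal. -/
def IsEvenForm (N : Matrix ι ι R) : Prop := ∃ U, N = U + Uᵀ

theorem isEvenForm_add_transpose (U : Matrix ι ι R) : IsEvenForm (U + Uᵀ) := ⟨U, rfl⟩

theorem IsEvenForm.apply_comm {N : Matrix ι ι R} (hN : IsEvenForm N) (i j : ι) :
    N i j = N j i := by
  obtain ⟨U, rfl⟩ := hN
  exact add_comm _ _

theorem IsEvenForm.even_diag {N : Matrix ι ι R} (hN : IsEvenForm N) (i : ι) : Even (N i i) := by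
  obtain ⟨U, rfl⟩ := hN
  exact ⟨U i i, rfl⟩

theorem IsEvenForm.add {M N : Matrix ι ι R} (hM : IsEvenForm M) (hN : IsEvenForm N) :
    IsEvenForm (M + N) := by
  obtain ⟨U, rfl⟩ := hM
  obtain ⟨V, rfl⟩ := hN
  exact ⟨U + V, by rw [transpose_add]; abel⟩

theorem IsEvenForm.neg {N : Matrix ι ι R} (hN : IsEvenForm N) : IsEvenForm (-N) := by
  obtain ⟨U, rfl⟩ := hN
  exact ⟨-U, by rw [transpose_neg]; abel⟩

theorem IsEvenForm.conj [Fintype ι] {N : Matrix ι ι R} (hN : IsEvenForm N) (K : Matrix ι ι R) :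
    IsEvenForm (Kᵀ * N * K) := by
  obtain ⟨U, rfl⟩ := hN
  exact ⟨Kᵀ * U * K, by simp [Matrix.mul_add, Matrix.add_mul, Matrix.mul_assoc]⟩

variable [DecidableEq ι]

/-- The symmetric matrix `t (Eᵢⱼ + Eⱼᵢ)`, with diagonal entry `2t` if `i = j`. -/
def shearMatrix (i j : ι) (t : R) : Matrix ι ι R := Matrix.single i j t + Matrix.single j i t

theorem shearMatrix_comm (i j : ι) (t : R) : shearMatrix i j t = shearMatrix j i t :=
  add_comm _ _

theorem isEvenForm_shearMatrix (i j : ι) (t : R) : IsEvenForm (shearMatrix i j t) :=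
  ⟨Matrix.single i j t, by simp [shearMatrix]⟩

end EvenForm

section Pivot

variable {ι R : Type*} [DecidableEq ι]

/-- The matrix with the rows of `Y` at the indices in `S` and the rows of `X` elsewhere. -/
def pivot (X Y : Matrix ι ι R) (S : Finset ι) : Matrix ι ι R := S.piecewise Y X

@[simp]
theorem pivot_empty (X Y : Matrix ι ι R) : pivot X Y ∅ = X := Finset.piecewise_empty _ _

theorem pivot_apply (X Y : Matrix ι ι R) (S : Finset ι) (k : ι) :
    pivot X Y S k = if k ∈ S then Y k else X k := rfl

variable [CommRing R]

/-- The partner of `pivot X Y S`: the pair of both is obtained from `(X, Y)` by the quarter turns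
`(Xₖ, Yₖ) ↦ (Yₖ, -Xₖ)` of the rows `k ∈ S`. -/
def copivot (X Y : Matrix ι ι R) (S : Finset ι) : Matrix ι ι R := S.piecewise (-X) Y

theorem copivot_apply (X Y : Matrix ι ι R) (S : Finset ι) (k : ι) :
    copivot X Y S k = if k ∈ S then -X k else Y k := rfl

variable [Fintype ι]

theorem pivot_mul (X Y K : Matrix ι ι R) (S : Finset ι) :
    pivot X Y S * K = pivot (X * K) (Y * K) S := by
  ext k r
  by_cases hk : k ∈ S <;> simp [pivot_apply, Matrix.mul_apply, hk]

theorem pivot_transpose_mul_copivot (X Y : Matrix ι ι R) (S : Finset ι) :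
    (pivot X Y S)ᵀ * copivot X Y S +
      ((pivot 0 X S)ᵀ * Y + ((pivot 0 X S)ᵀ * Y)ᵀ) = Xᵀ * Y := by
  ext r s
  simp only [Matrix.add_apply, Matrix.mul_apply, transpose_apply, ← Finset.sum_add_distrib]
  refine Finset.sum_congr rfl fun k _ ↦ ?_
  by_cases hk : k ∈ S
  · simp only [pivot_apply, copivot_apply, hk, if_true, Pi.neg_apply]
    ring
  · simp [pivot_apply, copivot_apply, hk]

theorem isEvenForm_pivot_transpose_mul_copivot_iff {X Y : Matrix ι ι R} {S : Finset ι} :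
    IsEvenForm ((pivot X Y S)ᵀ * copivot X Y S) ↔ IsEvenForm (Xᵀ * Y) := by
  rw [← pivot_transpose_mul_copivot X Y S]
  refine ⟨fun h ↦ h.add (isEvenForm_add_transpose _), fun h ↦ ?_⟩
  simpa only [add_neg_cancel_right] using
    h.add (isEvenForm_add_transpose ((pivot 0 X S)ᵀ * Y)).neg

theorem det_pivot_pivot (X Y : Matrix ι ι R) (S T : Finset ι) :
    (pivot (pivot X Y S) (copivot X Y S) T).det =
      (-1) ^ (S ∩ T).card * (pivot X Y (symmDiff S T)).det := by
  have hdiag : pivot (pivot X Y S) (copivot X Y S) T =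
      diagonal (fun k ↦ if k ∈ S ∩ T then -1 else 1) * pivot X Y (symmDiff S T) := by
    ext k r
    rw [diagonal_mul]
    by_cases hS : k ∈ S <;> by_cases hT : k ∈ T <;>
      simp [pivot_apply, copivot_apply, hS, hT, Finset.mem_symmDiff]
  rw [hdiag, det_mul, det_diagonal, Finset.prod_ite_mem, Finset.univ_inter, Finset.prod_const]

theorem det_one_add_vecMulVec_add_vecMulVec (a b u v : ι → R) :
    (1 + vecMulVec a u + vecMulVec b v).det =
      (1 + u ⬝ᵥ a) * (1 + v ⬝ᵥ b) - (u ⬝ᵥ b) * (v ⬝ᵥ a) := by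
  have hfactor : vecMulVec a u + vecMulVec b v = (of ![a, b])ᵀ * of ![u, v] := by
    ext k r
    simp [vecMulVec_apply, Matrix.mul_apply]
  rw [add_assoc, hfactor, det_one_add_mul_comm, det_fin_two]
  simp [Matrix.vecMul, dotProduct]

theorem det_pivot_one_pair (T : Matrix ι ι R) {i j : ι} (hij : i ≠ j) :
    (pivot 1 T {i, j}).det = T i i * T j j - T i j * T j i := by
  have hrows : pivot 1 T {i, j} = 1 + vecMulVec (Pi.single i 1) (T i - Pi.single i 1) +
      vecMulVec (Pi.single j 1) (T j - Pi.single j 1) := by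
    ext k r
    rcases eq_or_ne k i with rfl | hi
    · simp [pivot_apply, vecMulVec_apply, hij, one_apply, Pi.single_apply, eq_comm]
    rcases eq_or_ne k j with rfl | hj
    · simp [pivot_apply, vecMulVec_apply, hi, one_apply, Pi.single_apply, eq_comm]
    · simp [pivot_apply, vecMulVec_apply, hi, hj]
  rw [hrows, det_one_add_vecMulVec_add_vecMulVec]
  simp [hij, hij.symm]

theorem exists_isEvenForm_mul_eq {X Y : Matrix ι ι R} (hX : IsUnit X.det)
    (hXY : IsEvenForm (Xᵀ * Y)) : ∃ T, IsEvenForm T ∧ Y = T * X := by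
  refine ⟨Y * X⁻¹, ?_, (nonsing_inv_mul_cancel_right X Y hX).symm⟩
  have hconj := hXY.conj X⁻¹
  rwa [← Matrix.mul_assoc, ← transpose_mul, mul_nonsing_inv X hX, transpose_one,
    Matrix.one_mul] at hconj

theorem pivot_mul_self (T X : Matrix ι ι R) (S : Finset ι) :
    pivot X (T * X) S = pivot 1 T S * X := by
  rw [pivot_mul, Matrix.one_mul]

theorem shearMatrix_mul_apply (i j : ι) (t : R) (Y : Matrix ι ι R) (k r : ι) :
    (shearMatrix i j t * Y) k r =
      (if k = i then t * Y j r else 0) + if k = j then t * Y i r else 0 := by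
  simp only [shearMatrix, Matrix.mul_apply, Matrix.add_apply, Matrix.single_apply, add_mul,
    Finset.sum_add_distrib, ite_and, ite_mul, zero_mul]
  simp [Finset.sum_ite_irrel, eq_comm]

theorem isEvenForm_shear_transpose_mul {X Y : Matrix ι ι R} (hXY : IsEvenForm (Xᵀ * Y))
    (i j : ι) (t : R) : IsEvenForm ((X + shearMatrix i j t * Y)ᵀ * Y) := by
  have hsymm : (shearMatrix i j t)ᵀ = shearMatrix i j t := by
    ext k l
    exact (isEvenForm_shearMatrix i j t).apply_comm l k
  rw [transpose_add, transpose_mul, hsymm, Matrix.add_mul]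
  exact hXY.add ((isEvenForm_shearMatrix i j t).conj Y)

theorem det_one_add_shearMatrix_mul (i j : ι) (t : R) (T : Matrix ι ι R) :
    (1 + shearMatrix i j t * T).det =
      (1 + t * T j i) * (1 + t * T i j) - t * T j j * (t * T i i) := by
  have hrows : shearMatrix i j t * T =
      vecMulVec (Pi.single i 1) (t • T j) + vecMulVec (Pi.single j 1) (t • T i) := by
    ext k r
    simp [shearMatrix_mul_apply, vecMulVec_apply, Pi.single_apply]
  rw [hrows, ← add_assoc, det_one_add_vecMulVec_add_vecMulVec]
  simp

/-- If `i ∈ S`, shearing along `(i, j)` only adds a multiple of the row `Yᵢ` to the row `Xⱼ`. -/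
theorem det_pivot_shear_of_mem (X Y : Matrix ι ι R) {S : Finset ι} {i : ι} (hi : i ∈ S) (j : ι)
    (t : R) : (pivot (X + shearMatrix i j t * Y) Y S).det = (pivot X Y S).det := by
  by_cases hj : j ∈ S
  · congr 1
    ext k r
    by_cases hk : k ∈ S
    · simp [pivot_apply, hk]
    · have hki : k ≠ i := fun h ↦ hk (h ▸ hi)
      have hkj : k ≠ j := fun h ↦ hk (h ▸ hj)
      simp [pivot_apply, hk, shearMatrix_mul_apply, hki, hkj]
  · have hji : j ≠ i := fun h ↦ hj (h ▸ hi)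
    rw [← det_updateRow_add_smul_self (pivot X Y S) hji t]
    congr 1
    ext k r
    rcases eq_or_ne k j with rfl | hkj
    · simp [pivot_apply, hj, hi, shearMatrix_mul_apply, hji]
    · by_cases hk : k ∈ S
      · simp [pivot_apply, hk, hkj]
      · have hki : k ≠ i := fun h ↦ hk (h ▸ hi)
        simp [pivot_apply, hk, shearMatrix_mul_apply, hki, hkj]

theorem pivot_shear_of_notMem (X Y : Matrix ι ι R) {S : Finset ι} {i j : ι} (hi : i ∉ S)
    (hj : j ∉ S) (t : R) :
    pivot (X + shearMatrix i j t * Y) Y S = pivot X Y S + shearMatrix i j t * copivot X Y S := by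
  ext k r
  by_cases hk : k ∈ S
  · have hki : k ≠ i := fun h ↦ hi (h ▸ hk)
    have hkj : k ≠ j := fun h ↦ hj (h ▸ hk)
    simp [pivot_apply, hk, shearMatrix_mul_apply, hki, hkj]
  · simp [pivot_apply, copivot_apply, hk, shearMatrix_mul_apply, hi, hj]

theorem copivot_shear_of_notMem (X Y : Matrix ι ι R) {S : Finset ι} {i j : ι} (hi : i ∉ S)
    (hj : j ∉ S) (t : R) :
    copivot (X + shearMatrix i j t * Y) Y S = copivot X Y S := by
  ext k r
  by_cases hk : k ∈ S
  · have hki : k ≠ i := fun h ↦ hi (h ▸ hk)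
    have hkj : k ≠ j := fun h ↦ hj (h ▸ hk)
    simp [copivot_apply, hk, shearMatrix_mul_apply, hki, hkj]
  · simp [copivot_apply, hk]

/-- For invertible `M = pivot X Y S` this is the `c` with `i ^ c = i ^ |S| * det M`, where `i` is
the imaginary unit and `det M = ±1`; it is the phase of the corresponding term of the expansion
`det (X + i Y) = ∑ S, i ^ |S| * det (pivot X Y S)`. -/
def phase (X Y : Matrix ι ι (ZMod 4)) (S : Finset ι) : ZMod 4 :=
  S.card + ((pivot X Y S).det - 1)

/-- `(X, Y)` is a Lagrangian frame, even for the quadratic form, with phase `c` at some invertible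
pivot. -/
def HasPhase (X Y : Matrix ι ι (ZMod 4)) (c : ZMod 4) : Prop :=
  IsEvenForm (Xᵀ * Y) ∧ ∃ S, IsUnit (pivot X Y S).det ∧ c = phase X Y S

theorem neg_one_pow_mul_of_isUnit {u : ZMod 4} (hu : IsUnit u) (n : ℕ) :
    (-1) ^ n * u = u + 2 * n := by
  induction n with
  | zero => simp
  | succ n ih =>
    have hflip : ∀ u m : ZMod 4, IsUnit u → -(u + 2 * m) = u + 2 * (m + 1) := by decide
    rw [pow_succ', mul_assoc, ih, neg_one_mul, hflip _ _ hu, Nat.cast_succ]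

theorem isUnit_det_pivot_pivot_iff {X Y : Matrix ι ι (ZMod 4)} {S T : Finset ι} :
    IsUnit (pivot (pivot X Y S) (copivot X Y S) T).det ↔ IsUnit (pivot X Y (symmDiff S T)).det := by
  rw [det_pivot_pivot, IsUnit.mul_iff, and_iff_right (isUnit_one.neg.pow _)]

theorem phase_pivot {X Y : Matrix ι ι (ZMod 4)} {S T : Finset ι}
    (h : IsUnit (pivot X Y (symmDiff S T)).det) :
    phase (pivot X Y S) (copivot X Y S) T + S.card = phase X Y (symmDiff S T) := by
  have hcard : (symmDiff S T).card + 2 * (S ∩ T).card = S.card + T.card := by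
    rw [symmDiff_def, Finset.sup_eq_union, Finset.card_union_of_disjoint disjoint_sdiff_sdiff]
    have h1 := Finset.card_inter_add_card_sdiff S T
    have h2 := Finset.card_inter_add_card_sdiff T S
    rw [Finset.inter_comm] at h2
    omega
  have hcast := congrArg (Nat.cast : ℕ → ZMod 4) hcard
  push_cast at hcast
  rw [phase, phase, det_pivot_pivot, neg_one_pow_mul_of_isUnit h]
  have hfour : (4 : ZMod 4) = 0 := rfl
  linear_combination -hcast + (S ∩ T).card * hfour

theorem hasPhase_pivot_iff {X Y : Matrix ι ι (ZMod 4)} {S : Finset ι} {c : ZMod 4} :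
    HasPhase (pivot X Y S) (copivot X Y S) c ↔ HasPhase X Y (c + S.card) := by
  refine and_congr isEvenForm_pivot_transpose_mul_copivot_iff ⟨?_, ?_⟩
  · rintro ⟨T, hT, rfl⟩
    rw [isUnit_det_pivot_pivot_iff] at hT
    exact ⟨symmDiff S T, hT, phase_pivot hT⟩
  · rintro ⟨T, hT, hc⟩
    have hST : symmDiff S (symmDiff S T) = T := symmDiff_symmDiff_cancel_left S T
    refine ⟨symmDiff S T, isUnit_det_pivot_pivot_iff.mpr (by rwa [hST]), ?_⟩
    rw [← add_left_inj, hc, phase_pivot (by rwa [hST]), hST]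

theorem isUnit_det_pivot_pair_and_phase_eq {X T : Matrix ι ι (ZMod 4)} (hX : IsUnit X.det)
    (hT : IsEvenForm T) {i j : ι} (hTij : IsUnit (T i j)) :
    IsUnit (pivot X (T * X) {i, j}).det ∧ phase X (T * X) {i, j} = X.det - 1 := by
  have hij : i ≠ j := by
    rintro rfl
    have hodd : ∀ x : ZMod 4, IsUnit (x + x) → False := by decide
    obtain ⟨x, hx⟩ := hT.even_diag i
    exact hodd x (hx ▸ hTij)
  have hdet : (pivot X (T * X) {i, j}).det = -X.det := by
    obtain ⟨a, ha⟩ := hT.even_diag i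
    obtain ⟨b, hb⟩ := hT.even_diag j
    have hminor : ∀ a b u : ZMod 4, IsUnit u → (a + a) * (b + b) - u * u = -1 := by decide
    rw [pivot_mul_self, det_mul, det_pivot_one_pair T hij, hT.apply_comm j i, ha, hb,
      hminor a b _ hTij, neg_one_mul]
  refine ⟨hdet ▸ hX.neg, ?_⟩
  have htwo : ∀ u : ZMod 4, IsUnit u → 2 + (-u - 1) = u - 1 := by decide
  rw [phase, hdet, Finset.card_pair hij]
  exact htwo _ hX

theorem exists_isUnit_apply_of_isUnit_det_pivot {T : Matrix ι ι (ZMod 4)} (hT : IsEvenForm T)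
    {S : Finset ι} (hS : IsUnit (pivot 1 T S).det) {i : ι} (hi : i ∈ S) :
    ∃ j ∈ S, IsUnit (T i j) := by
  by_contra! hall
  have hcast : ∀ x : ZMod 4, ¬IsUnit x → ZMod.castHom (by decide : 2 ∣ 4) (ZMod 2) x = 0 := by
    decide
  have hmod := hS.map (ZMod.castHom (by decide : 2 ∣ 4) (ZMod 2))
  rw [RingHom.map_det] at hmod
  refine hmod.ne_zero (det_eq_zero_of_column_eq_zero i fun k ↦ ?_)
  rw [RingHom.mapMatrix_apply, map_apply, pivot_apply]
  split_ifs with hk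
  · exact hcast _ (hT.apply_comm k i ▸ hall k hk)
  · have hki : k ≠ i := fun h ↦ hk (h ▸ hi)
    rw [one_apply_ne hki, map_zero]

/-- Induction on `|S|`: some `2 × 2` pivot `{i, j} ⊆ S` has the same phase as `∅`, and turning it
leaves the pivot `S \ {i, j}`. -/
theorem phase_eq_of_isUnit_det (S : Finset ι) : ∀ {X Y : Matrix ι ι (ZMod 4)}, IsUnit X.det →
    IsEvenForm (Xᵀ * Y) → IsUnit (pivot X Y S).det → phase X Y S = X.det - 1 := by
  induction S using Finset.strongInduction with | H S ih => ?_
  intro X Y hX hXY hS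
  rcases S.eq_empty_or_nonempty with rfl | ⟨i, hi⟩
  · simp [phase]
  obtain ⟨T, hT, rfl⟩ := exists_isEvenForm_mul_eq hX hXY
  have hST : IsUnit (pivot 1 T S).det := by
    rw [pivot_mul_self, det_mul] at hS
    exact isUnit_of_mul_isUnit_left hS
  obtain ⟨j, hj, hTij⟩ := exists_isUnit_apply_of_isUnit_det_pivot hT hST hi
  obtain ⟨hpair, hphase⟩ := isUnit_det_pivot_pair_and_phase_eq hX hT hTij
  have hsub : {i, j} ⊆ S := Finset.insert_subset hi (Finset.singleton_subset_iff.mpr hj)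
  have hsymm : symmDiff {i, j} (S \ {i, j}) = S := by
    rw [symmDiff_sdiff_eq_sup, sup_eq_right.mpr hsub]
  have hrest := ih (S \ {i, j}) (Finset.sdiff_ssubset hsub ⟨i, by simp⟩) hpair
    (isEvenForm_pivot_transpose_mul_copivot_iff.mpr hXY)
    (isUnit_det_pivot_pivot_iff.mpr (by rwa [hsymm]))
  rw [← hphase, ← hsymm, ← phase_pivot (by rwa [hsymm]), hrest, phase, add_comm]

theorem HasPhase.unique {X Y : Matrix ι ι (ZMod 4)} {c c' : ZMod 4} (h : HasPhase X Y c)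
    (h' : HasPhase X Y c') : c = c' := by
  obtain ⟨hXY, S, hS, rfl⟩ := h
  obtain ⟨-, T, hT, rfl⟩ := h'
  have hST : symmDiff S (symmDiff S T) = T := symmDiff_symmDiff_cancel_left S T
  have hturn := phase_eq_of_isUnit_det (symmDiff S T) hS
    (isEvenForm_pivot_transpose_mul_copivot_iff.mpr hXY)
    (isUnit_det_pivot_pivot_iff.mpr (by rwa [hST]))
  have hphase := phase_pivot (X := X) (Y := Y) (S := S) (T := symmDiff S T) (by rwa [hST])
  rw [hST, hturn] at hphase
  rw [← hphase, phase, add_comm]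

theorem hasPhase_shear_of_isUnit_det {X Y : Matrix ι ι (ZMod 4)} (hX : IsUnit X.det)
    (hXY : IsEvenForm (Xᵀ * Y)) (i j : ι) (t : ZMod 4) :
    HasPhase (X + shearMatrix i j t * Y) Y (X.det - 1) := by
  refine ⟨isEvenForm_shear_transpose_mul hXY i j t, ?_⟩
  obtain ⟨T, hT, rfl⟩ := exists_isEvenForm_mul_eq hX hXY
  by_cases hTij : IsUnit (T i j)
  · obtain ⟨hpair, hphase⟩ := isUnit_det_pivot_pair_and_phase_eq hX hT hTij
    have hi : i ∈ ({i, j} : Finset ι) := Finset.mem_insert_self i _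
    have hdet := det_pivot_shear_of_mem X (T * X) hi j t
    exact ⟨{i, j}, by rwa [hdet], by rw [← hphase, phase, phase, hdet]⟩
  · have hdet : (X + shearMatrix i j t * (T * X)).det = X.det := by
      obtain ⟨a, ha⟩ := hT.even_diag i
      obtain ⟨b, hb⟩ := hT.even_diag j
      have hone : ∀ t a b x : ZMod 4, ¬IsUnit x →
          (1 + t * x) * (1 + t * x) - t * (b + b) * (t * (a + a)) = 1 := by decide
      rw [← Matrix.mul_assoc, ← one_add_mul, det_mul, det_one_add_shearMatrix_mul,
        hT.apply_comm j i, ha, hb, hone t a b _ hTij, one_mul]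
    exact ⟨∅, by rwa [pivot_empty, hdet], by simp [phase, hdet]⟩

theorem HasPhase.shear {X Y : Matrix ι ι (ZMod 4)} {c : ZMod 4} (h : HasPhase X Y c) (i j : ι)
    (t : ZMod 4) : HasPhase (X + shearMatrix i j t * Y) Y c := by
  obtain ⟨hXY, S, hS, rfl⟩ := h
  by_cases hmem : i ∈ S ∨ j ∈ S
  · have hdet : (pivot (X + shearMatrix i j t * Y) Y S).det = (pivot X Y S).det := by
      rcases hmem with hi | hj
      · exact det_pivot_shear_of_mem X Y hi j t
      · rw [shearMatrix_comm]
        exact det_pivot_shear_of_mem X Y hj i t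
    exact ⟨isEvenForm_shear_transpose_mul hXY i j t, S, by rwa [hdet], by rw [phase, phase, hdet]⟩
  · obtain ⟨hi, hj⟩ := not_or.mp hmem
    rw [phase, add_comm (S.card : ZMod 4), ← hasPhase_pivot_iff, pivot_shear_of_notMem X Y hi hj,
      copivot_shear_of_notMem X Y hi hj]
    exact hasPhase_shear_of_isUnit_det hS (isEvenForm_pivot_transpose_mul_copivot_iff.mpr hXY) i j t

theorem hasPhase_one_zero : HasPhase (1 : Matrix ι ι (ZMod 4)) 0 0 :=
  ⟨⟨0, by simp⟩, ∅, by simp, by simp [phase]⟩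

end Pivot

/-! ### The character -/

/-- The first half of the Lagrangian frame `A e₁, …, A e_g` modulo 4: its `x`-coordinates. -/
def frameX (A : Spq g) : Matrix (Fin g) (Fin g) (ZMod 4) := of fun k r ↦ (A • eVec r) (inl k)

/-- The second half of the Lagrangian frame `A e₁, …, A e_g` modulo 4: its `y`-coordinates. -/
def frameY (A : Spq g) : Matrix (Fin g) (Fin g) (ZMod 4) := of fun k r ↦ (A • eVec r) (inr k)

theorem frameX_one : frameX (1 : Spq g) = 1 := by
  ext k r
  simp [frameX, one_apply, Pi.single_apply]

theorem frameY_one : frameY (1 : Spq g) = 0 := by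
  ext k r
  simp [frameY]

theorem pivot_frame_rot_mul (i : Fin g) (A : Spq g) :
    pivot (frameX (rot i * A)) (frameY (rot i * A)) {i} = frameX A := by
  ext k r
  by_cases hk : k = i <;> simp [pivot_apply, frameX, frameY, mul_smul, hk]

theorem copivot_frame_rot_mul (i : Fin g) (A : Spq g) :
    copivot (frameX (rot i * A)) (frameY (rot i * A)) {i} = frameY A := by
  ext k r
  by_cases hk : k = i <;> simp [copivot_apply, frameX, frameY, mul_smul, hk]

theorem frameX_shear_mul (i j : Fin g) (t : ℤ) (A : Spq g) :
    frameX (shear i j t * A) = frameX A + shearMatrix i j (t : ZMod 4) * frameY A := by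
  ext k r
  rw [Matrix.add_apply, shearMatrix_mul_apply]
  simp [frameX, frameY, mul_smul]

theorem frameY_shear_mul (i j : Fin g) (t : ℤ) (A : Spq g) :
    frameY (shear i j t * A) = frameY A := by
  ext k r
  simp [frameY, mul_smul]

/-- Left multiplication by `B` adds `d` to the phase of the frame of every `A`. -/
def ShiftsPhase (B : Spq g) (d : ZMod 4) : Prop :=
  ∀ A c, HasPhase (frameX (B * A)) (frameY (B * A)) (c + d) ↔ HasPhase (frameX A) (frameY A) c

theorem shiftsPhase_rot (i : Fin g) : ShiftsPhase (rot i) 1 := fun A c ↦ by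
  rw [← pivot_frame_rot_mul i A, ← copivot_frame_rot_mul i A, hasPhase_pivot_iff,
    Finset.card_singleton, Nat.cast_one]

theorem shiftsPhase_shear (i j : Fin g) (t : ℤ) : ShiftsPhase (shear i j t) 0 := fun A c ↦ by
  have hshear (t : ℤ) (A : Spq g) (h : HasPhase (frameX A) (frameY A) c) :
      HasPhase (frameX (shear i j t * A)) (frameY (shear i j t * A)) c := by
    rw [frameX_shear_mul, frameY_shear_mul]
    exact h.shear i j t
  rw [add_zero]
  refine ⟨fun h ↦ ?_, hshear t A⟩
  rw [← one_mul A, ← shear_neg_mul_shear i j t, mul_assoc]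
  exact hshear (-t) _ h

theorem shiftsPhase_one : ShiftsPhase (1 : Spq g) 0 := fun A c ↦ by rw [one_mul, add_zero]

theorem ShiftsPhase.mul {B B' : Spq g} {d d' : ZMod 4} (h : ShiftsPhase B d)
    (h' : ShiftsPhase B' d') : ShiftsPhase (B * B') (d + d') := fun A c ↦ by
  rw [add_comm d, ← add_assoc, mul_assoc, h, h']

theorem ShiftsPhase.inv {B : Spq g} {d : ZMod 4} (h : ShiftsPhase B d) :
    ShiftsPhase B⁻¹ (-d) := fun A c ↦ by
  rw [← h, neg_add_cancel_right, mul_inv_cancel_left]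

theorem ShiftsPhase.unique {B : Spq g} {d d' : ZMod 4} (h : ShiftsPhase B d)
    (h' : ShiftsPhase B d') : d = d' := by
  have hone : HasPhase (frameX (1 : Spq g)) (frameY 1) 0 := by
    rw [frameX_one, frameY_one]
    exact hasPhase_one_zero
  simpa only [zero_add] using ((h 1 0).mpr hone).unique ((h' 1 0).mpr hone)

theorem exists_shiftsPhase (B : Spq g) : ∃ d, ShiftsPhase B d := by
  have hB : B ∈ elementary (Finset.univ : Finset (Fin g)) := elementary_univ ▸ Subgroup.mem_top B
  induction hB using Subgroup.closure_induction with
  | mem B hB =>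
    rcases hB with ⟨i, -, rfl⟩ | ⟨i, -, j, -, t, rfl⟩
    · exact ⟨1, shiftsPhase_rot i⟩
    · exact ⟨0, shiftsPhase_shear i j t⟩
  | one => exact ⟨0, shiftsPhase_one⟩
  | mul B B' _ _ hB hB' =>
    obtain ⟨d, hd⟩ := hB
    obtain ⟨d', hd'⟩ := hB'
    exact ⟨d + d', hd.mul hd'⟩
  | inv B _ hB =>
    obtain ⟨d, hd⟩ := hB
    exact ⟨-d, hd.inv⟩

/-- The character of `Sp^q` recording by how much an element shifts the phase of frames. -/
noncomputable def phaseHom : Spq g →* Multiplicative (ZMod 4) :=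
  MonoidHom.mk' (fun B ↦ .ofAdd (exists_shiftsPhase B).choose) fun B B' ↦
    congrArg Multiplicative.ofAdd <| (exists_shiftsPhase (B * B')).choose_spec.unique <|
      (exists_shiftsPhase B).choose_spec.mul (exists_shiftsPhase B').choose_spec

theorem phaseHom_rot (i : Fin g) : phaseHom (rot i) = .ofAdd 1 :=
  congrArg Multiplicative.ofAdd <|
    (exists_shiftsPhase (rot i)).choose_spec.unique (shiftsPhase_rot i)

/-! ### The abelianization -/

theorem transvec_mul_shear {i j k : Fin g} (hik : i ≠ k) (hjk : j ≠ k) (t : ℤ) :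
    transvec i k 1 * shear k j t = shear i j t * shear k j t * transvec i k 1 := by
  refine ext_smul_apply (fun v l ↦ ?_) fun v l ↦ ?_
  · simp only [mul_smul, shear_smul_inl, shear_smul_inr, transvec_smul_inl hik,
      transvec_smul_inr hik]
    grind
  · simp [mul_smul, transvec_smul_inr hik]

theorem swap_mul_rot {i j : Fin g} (hij : i ≠ j) : swap i j * rot j = rot i * swap i j := by
  refine ext_smul_apply (fun v l ↦ ?_) fun v l ↦ ?_ <;>
    by_cases hli : l = i <;> by_cases hlj : l = j <;>
      simp_all [mul_smul, swap_smul_inl, swap_smul_inr]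

theorem abelianization_of_shear_eq_one (hg : 3 ≤ g) (i j : Fin g) (t : ℤ) :
    Abelianization.of (shear i j t) = 1 := by
  obtain ⟨k, hk⟩ := Finset.exists_mem_notMem_of_card_lt_card (s := {i, j}) (t := Finset.univ)
    (Finset.card_le_two.trans_lt (by rwa [Finset.card_fin, ← Nat.succ_le_iff]))
  obtain ⟨hik, hjk⟩ : i ≠ k ∧ j ≠ k := by simpa [eq_comm] using hk.2
  have h := congrArg Abelianization.of (transvec_mul_shear hik hjk t)
  rw [map_mul, map_mul, map_mul, mul_comm] at h
  exact mul_eq_right.mp (mul_right_cancel h).symm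

theorem abelianization_of_swap_eq_one (hg : 3 ≤ g) (i j : Fin g) :
    Abelianization.of (swap i j) = 1 := by
  have htransvec (i j : Fin g) (t : ℤ) : Abelianization.of (transvec i j t) = 1 := by
    rw [transvec, map_mul, map_mul, abelianization_of_shear_eq_one hg, mul_one, map_inv,
      inv_mul_cancel]
  simp only [swap, map_mul, htransvec, mul_one]

theorem abelianization_of_rot_eq_of_rot (hg : 3 ≤ g) (i j : Fin g) :
    Abelianization.of (rot i) = Abelianization.of (rot j) := by
  rcases eq_or_ne i j with rfl | hij
  · rfl
  · have h := congrArg Abelianization.of (swap_mul_rot hij)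
    rwa [map_mul, map_mul, abelianization_of_swap_eq_one hg, one_mul, mul_one, eq_comm] at h

theorem zpowers_abelianization_of_rot_eq_top (hg : 3 ≤ g) (i : Fin g) :
    Subgroup.zpowers (Abelianization.of (rot i)) = ⊤ := by
  set Z := Subgroup.zpowers (Abelianization.of (rot i))
  have hle : elementary Finset.univ ≤ Z.comap Abelianization.of := by
    refine (Subgroup.closure_le _).mpr (Set.union_subset ?_ ?_)
    · rintro _ ⟨j, -, rfl⟩
      rw [SetLike.mem_coe, Subgroup.mem_comap, abelianization_of_rot_eq_of_rot hg j i]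
      exact Subgroup.mem_zpowers _
    · rintro _ ⟨j, -, k, -, t, rfl⟩
      rw [SetLike.mem_coe, Subgroup.mem_comap, abelianization_of_shear_eq_one hg]
      exact one_mem Z
  rw [elementary_univ] at hle
  refine top_le_iff.mp fun x _ ↦ ?_
  obtain ⟨A, rfl⟩ := QuotientGroup.mk_surjective x
  exact hle (Subgroup.mem_top A)

theorem orderOf_abelianization_of_rot (i : Fin g) : orderOf (Abelianization.of (rot i)) = 4 := by
  refine Nat.dvd_antisymm (orderOf_dvd_of_pow_eq_one ?_) ?_
  · rw [← map_pow, rot_pow_four, map_one]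
  · have h := orderOf_map_dvd (Abelianization.lift phaseHom) (Abelianization.of (rot i))
    rwa [Abelianization.lift_apply_of, phaseHom_rot, orderOf_ofAdd_eq_addOrderOf,
      ZMod.addOrderOf_one] at h

end Spq

/-- For every `g ≥ 3`, the abelianisation of `Sp^q_{2g}(ℤ)` is cyclic of
order 4. -/
theorem abelianization_Spq (g : ℕ) (hg : 3 ≤ g) :
    Nonempty (Abelianization ↥(Spq g) ≃* Multiplicative (ZMod 4)) := by
  let i : Fin g := ⟨0, by omega⟩
  have hgen := Spq.zpowers_abelianization_of_rot_eq_top hg i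
  have : IsCyclic (Abelianization (Spq g)) := isCyclic_iff_exists_zpowers_eq_top.mpr ⟨_, hgen⟩
  have hcard : Nat.card (Abelianization (Spq g)) = 4 := by
    rw [← orderOf_eq_card_of_zpowers_eq_top hgen, Spq.orderOf_abelianization_of_rot]
  exact ⟨mulEquivOfCyclicCardEq (hcard.trans (by simp))⟩
end
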